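/- arXiv:2006.13867 — 3 statements merged into one kernel-verified Lean document; each statement's English description precedes it below -/
import Mathlib

section
/- There is a constant c₁ > 0, depending only on n, α, Σ and w, such that w(B₁(ξ) ∩ Σ) ≥ w(B₁ ∩ Σ) + c₁ |ξ| for every nonzero ξ ∈ 𝒞 with |ξ| < c₁ and dist(ξ/|ξ|, Σ) < c₁, where w(F) = ∫_F w(x) dx denotes the weighted volume and B₁(ξ) is the open unit ball centered at ξ. -/
open MeasureTheory Metric Set
open scoped RealInnerProductSpace ENNReal NNReal Topology

noncomputable section

abbrev Euc (n : ℕ) := EuclideanSpace ℝ (Fin n)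

def IsOpenConvexCone {n : ℕ} (S : Set (Euc n)) : Prop :=
  IsOpen S ∧ Convex ℝ S ∧ ∀ x ∈ S, ∀ t : ℝ, 0 < t → t • x ∈ S

def IsAdmissibleWeight {n : ℕ} (S : Set (Euc n)) (α : ℝ) (w : Euc n → ℝ) : Prop :=
  ContinuousOn w (closure S) ∧ (∀ x ∈ closure S, 0 ≤ w x) ∧
  (∃ x ∈ closure S, w x ≠ 0) ∧
  (∀ x ∈ closure S, ∀ t : ℝ, 0 < t → w (t • x) = t ^ α * w x) ∧
  ConcaveOn ℝ S (fun x => w x ^ (1 / α))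

def wVol {n : ℕ} (w : Euc n → ℝ) (E : Set (Euc n)) : ℝ≥0∞ :=
  ∫⁻ x in E, ENNReal.ofReal (w x)

def linSpan (n k : ℕ) : Set (Euc n) := {x | ∀ i : Fin n, k ≤ (i : ℕ) → x i = 0}

/-- `𝒞`: directions orthogonal to `ℒ` along which `w` is constant. -/
def constDirs {n : ℕ} (S : Set (Euc n)) (w : Euc n → ℝ) (k : ℕ) : Set (Euc n) :=
  {v | (∀ u ∈ linSpan n k, ⟪v, u⟫ = 0) ∧
    ∀ x ∈ S, ∀ t : ℝ, x + t • v ∈ S → w (x + t • v) = w x}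

lemma cone_add {n : ℕ} {S : Set (Euc n)} (hS : IsOpenConvexCone S) {x y : Euc n}
    (hx : x ∈ S) (hy : y ∈ S) : x + y ∈ S := by
  have h := hS.2.1 hx hy (show (0:ℝ) ≤ 1/2 by norm_num) (show (0:ℝ) ≤ 1/2 by norm_num) (by norm_num)
  have h2 := hS.2.2 _ h 2 (by norm_num)
  simpa [smul_add, smul_smul] using h2

lemma cone_add_closure {n : ℕ} {S : Set (Euc n)} (hS : IsOpenConvexCone S) {x y : Euc n}
    (hx : x ∈ S) (hy : y ∈ closure S) : x + y ∈ S := by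
  obtain ⟨ε, hε, hb⟩ := Metric.isOpen_iff.1 hS.1 x hx
  obtain ⟨y', hy', hd⟩ := Metric.mem_closure_iff.1 hy ε hε
  have : x + (y - y') ∈ S := by
    apply hb
    simpa [mem_ball, dist_eq_norm] using hd
  have h2 := cone_add hS this hy'
  convert h2 using 1
  abel

lemma cone_line {n : ℕ} {S : Set (Euc n)} (hS : IsOpenConvexCone S) {x e : Euc n}
    (hx : x ∈ S) (he : e ∈ closure S) {t : ℝ} (ht : 0 < t) : x + t • e ∈ S := by
  have h := cone_add_closure hS (hS.2.2 x hx t⁻¹ (inv_pos.2 ht)) he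
  have h2 := hS.2.2 _ h t ht
  rwa [smul_add, smul_smul, mul_inv_cancel₀ ht.ne', one_smul] at h2

/-- uniform pointedness -/
lemma exists_eta {n k : ℕ} (S : Set (Euc n)) (hS : IsOpenConvexCone S) (hne : S.Nonempty)
    (hNoLine : ∀ p v : Euc n, (∀ t : ℝ, p + t • v ∈ S) → v ∈ linSpan n k) :
    ∃ η : ℝ, 0 < η ∧ ∀ e : Euc n, ‖e‖ = 1 → (∀ u ∈ linSpan n k, ⟪e, u⟫ = 0) →
      infDist e S < η → η < infDist (-e) S := by
  have hK : IsCompact (sphere (0 : Euc n) 1 ∩ {e | ∀ u ∈ linSpan n k, ⟪e, u⟫ = 0}) := by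
    apply (isCompact_sphere _ _).inter_right
    simp only [Set.ofPred_forall]
    refine isClosed_iInter fun u => isClosed_iInter fun _ => ?_
    exact isClosed_eq (by fun_prop) continuous_const
  have hf : Continuous fun e : Euc n => infDist e S + infDist (-e) S :=
    (continuous_infDist_pt S).add ((continuous_infDist_pt S).comp continuous_neg)
  obtain ⟨b, hb, hbe⟩ := hK.exists_forall_le' hf.continuousOn (a := 0) (by
    rintro e ⟨he, heu⟩
    by_contra hcon
    have h1 := infDist_nonneg (x := e) (s := S)
    have h2 := infDist_nonneg (x := -e) (s := S)
    have c1 : e ∈ closure S := (mem_closure_iff_infDist_zero hne).2 (by linarith)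
    have c2 : -e ∈ closure S := (mem_closure_iff_infDist_zero hne).2 (by linarith)
    obtain ⟨p, hp⟩ := hne
    have hl : e ∈ linSpan n k := by
      apply hNoLine p
      intro t
      rcases lt_trichotomy t 0 with ht | ht | ht
      · have := cone_line hS hp c2 (neg_pos.2 ht)
        simpa using this
      · simpa [ht] using hp
      · exact cone_line hS hp c1 ht
    have := heu e hl
    rw [inner_self_eq_zero] at this
    simp [this] at he)
  refine ⟨b / 2, by linarith, fun e he heu hd => ?_⟩
  have := hbe e ⟨by simpa using he, heu⟩
  linarith

open scoped Pointwise in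
/-- boundary layer estimate -/
lemma layer {n : ℕ} (S : Set (Euc n)) (hS : IsOpenConvexCone S) (v : Euc n) (hv : v ∈ S)
    (s : ℝ) (hs : 0 < s) (hsv : s * ‖v‖ < 1) :
    volume {x | x ∈ ball (0 : Euc n) 1 ∩ S ∧ x - s • v ∉ S} ≤
      ENNReal.ofReal (n * (s * ‖v‖)) * volume (ball (0 : Euc n) 1 ∩ S) := by
  set V := volume (ball (0 : Euc n) 1 ∩ S) with hV
  have hVfin : V ≠ ⊤ := ((measure_mono inter_subset_left).trans_lt measure_ball_lt_top).ne
  set ρ := 1 - s * ‖v‖ with hρ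
  have hρ0 : 0 < ρ := by linarith
  have hm : MeasurableSet (ball (0 : Euc n) 1 ∩ S) := measurableSet_ball.inter hS.1.measurableSet
  -- the good part
  have hG : ENNReal.ofReal (ρ ^ n) * V ≤ volume {x | x ∈ ball (0 : Euc n) 1 ∩ S ∧ x - s • v ∈ S} := by
    have h1 : volume (ρ • (ball (0 : Euc n) 1 ∩ S)) = ENNReal.ofReal (ρ ^ n) * V := by
      rw [Measure.addHaar_smul]
      simp [abs_of_pos hρ0, hV]
    rw [← h1, ← measure_preimage_add_right volume (-(s • v))]
    apply measure_mono
    rintro x hx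
    obtain ⟨y, ⟨hy1, hy2⟩, hy⟩ := hx
    simp only [← sub_eq_add_neg] at hy
    have hxs : x - s • v ∈ S := by rw [← hy]; exact hS.2.2 y hy2 ρ hρ0
    refine ⟨⟨?_, ?_⟩, hxs⟩
    · have : x = ρ • y + s • v := by rw [hy]; abel
      rw [mem_ball_zero_iff] at hy1 ⊢
      rw [this]
      calc ‖ρ • y + s • v‖ ≤ ‖ρ • y‖ + ‖s • v‖ := norm_add_le _ _
        _ = ρ * ‖y‖ + s * ‖v‖ := by rw [norm_smul, norm_smul, Real.norm_of_nonneg hρ0.le, Real.norm_of_nonneg hs.le]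
        _ < 1 := by nlinarith
    · have := cone_add hS hxs (hS.2.2 v hv s hs)
      simpa using this
  have hGm : MeasurableSet {x : Euc n | x - s • v ∈ S} :=
    (hS.1.preimage (by fun_prop : Continuous fun x : Euc n => x - s • v)).measurableSet
  have hsplit := measure_inter_add_sdiff (μ := volume) (ball (0 : Euc n) 1 ∩ S) hGm
  have hbern : 1 ≤ ρ ^ n + n * (s * ‖v‖) := by
    have := one_add_mul_le_pow (a := -(s * ‖v‖)) (by linarith) n
    have h2 : 1 + -(s * ‖v‖) = ρ := by rw [hρ]; ring
    rw [h2] at this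
    linarith
  have hA : ENNReal.ofReal (ρ ^ n) * V + volume {x | x ∈ ball (0 : Euc n) 1 ∩ S ∧ x - s • v ∉ S} ≤ V := by
    calc _ ≤ volume {x | x ∈ ball (0 : Euc n) 1 ∩ S ∧ x - s • v ∈ S} + volume {x | x ∈ ball (0 : Euc n) 1 ∩ S ∧ x - s • v ∉ S} := by gcongr
      _ = V := hsplit
  have hB : V ≤ ENNReal.ofReal (ρ ^ n) * V + ENNReal.ofReal (n * (s * ‖v‖)) * V := by
    rw [← add_mul, ← ENNReal.ofReal_add (by positivity) (by positivity)]
    calc V = 1 * V := (one_mul _).symm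
      _ ≤ _ := by gcongr; exact ENNReal.one_le_ofReal.2 hbern
  exact (ENNReal.add_le_add_iff_left (ENNReal.mul_ne_top ENNReal.ofReal_ne_top hVfin)).1 (hA.trans hB)

/-- covering argument -/
lemma cover {n : ℕ} (S : Set (Euc n)) (hSm : MeasurableSet S) (g : Euc n → ℝ≥0∞) (hg : Measurable g)
    (e : Euc n) (he : ‖e‖ = 1) (t r : ℝ) (ht : 0 < t) (ht2 : t < 1 / 2) (hr : r ≤ 1 / 4)
    (hconst : ∀ x ∈ S, ∀ s : ℝ, x + s • e ∈ S → g (x + s • e) = g x)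
    (hexit : ∀ y ∈ S, ‖y‖ < r → ∀ s : ℝ, 0 < s → y - s • e ∈ S → s < 1 / 4) :
    ENNReal.ofReal t * ∫⁻ x in ball (0 : Euc n) r ∩ S, g x ≤
      ∫⁻ x in {z | z ∈ S ∧ ‖z‖ < 1 / 2 ∧ z - t • e ∉ S}, g x := by
  set A : Set (Euc n) := {z | z ∈ S ∧ ‖z‖ < 1 / 2 ∧ z - t • e ∉ S} with hA
  have hAm : MeasurableSet A := by
    refine hSm.inter (MeasurableSet.inter ?_ ?_)
    · exact measurableSet_lt measurable_norm measurable_const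
    · exact ((by fun_prop : Measurable fun z : Euc n => z - t • e) hSm).compl
  set N := ⌊1 / (4 * t)⌋₊ with hN
  have hNle : ((N : ℝ) + 1) * t ≤ 1 := by
    have : (N : ℝ) ≤ 1 / (4 * t) := Nat.floor_le (by positivity)
    have h2 : (N : ℝ) * t ≤ 1 / 4 := by
      calc (N : ℝ) * t ≤ 1 / (4 * t) * t := by gcongr
        _ = 1 / 4 := by field_simp
    nlinarith
  have key : ∀ y, (ball (0 : Euc n) r ∩ S).indicator g y ≤
      ∑ j ∈ Finset.range (N + 1), A.indicator g (y - (j * t) • e) := by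
    intro y
    by_cases hy : y ∈ ball (0 : Euc n) r ∩ S
    · rw [indicator_of_mem hy]
      obtain ⟨hyb, hyS⟩ := hy
      rw [mem_ball_zero_iff] at hyb
      have hjlt : ∀ j : ℕ, y - (j * t) • e ∈ S → (j : ℝ) * t < 1 / 4 := by
        intro j hj
        rcases Nat.eq_zero_or_pos j with h0 | h0
        · simp [h0]
        · exact hexit y hyS hyb _ (by positivity) hj
      have hex : ∃ j : ℕ, y - (((j + 1 : ℕ) : ℝ) * t) • e ∉ S := by
        obtain ⟨j, hj⟩ := exists_nat_gt (1 / (4 * t))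
        refine ⟨j, fun h => ?_⟩
        have h1 := hjlt _ h
        rw [div_lt_iff₀ (by positivity)] at hj
        push_cast at h1
        nlinarith
      classical
      set j := Nat.find hex with hjdef
      have hj1 : y - (((j + 1 : ℕ) : ℝ) * t) • e ∉ S := Nat.find_spec hex
      have hj2 : y - ((j : ℝ) * t) • e ∈ S := by
        rcases Nat.eq_zero_or_pos j with h0 | h0
        · simpa [h0] using hyS
        · have := Nat.find_min hex (m := j - 1) (by omega)
          rw [not_not, Nat.sub_add_cancel h0] at this
          exact this
      have hjt := hjlt j hj2
      have hjA : y - ((j : ℝ) * t) • e ∈ A := by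
        refine ⟨hj2, ?_, ?_⟩
        · calc ‖y - ((j : ℝ) * t) • e‖ ≤ ‖y‖ + ‖((j : ℝ) * t) • e‖ := norm_sub_le _ _
            _ = ‖y‖ + j * t := by rw [norm_smul, he, Real.norm_of_nonneg (by positivity), mul_one]
            _ < 1 / 2 := by linarith
        · convert hj1 using 2
          push_cast
          rw [add_mul, add_smul, one_mul]
          abel
      have hjN : j ∈ Finset.range (N + 1) := by
        rw [Finset.mem_range, Nat.lt_succ_iff]
        apply Nat.le_floor
        rw [le_div_iff₀ (by positivity)]
        nlinarith
      calc g y = A.indicator g (y - ((j : ℝ) * t) • e) := by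
            rw [indicator_of_mem hjA]
            have := hconst y hyS (-((j : ℝ) * t)) (by simpa [sub_eq_add_neg] using hj2)
            rw [← this]
            simp [sub_eq_add_neg]
        _ ≤ _ := Finset.single_le_sum (f := fun j : ℕ => A.indicator g (y - ((j : ℝ) * t) • e))
              (fun _ _ => zero_le) hjN
    · rw [indicator_of_notMem hy]; exact zero_le
  have hint : ∫⁻ x in ball (0 : Euc n) r ∩ S, g x ≤ ((N + 1 : ℕ) : ℝ≥0∞) * ∫⁻ x in A, g x := by
    rw [← lintegral_indicator (measurableSet_ball.inter hSm), ← lintegral_indicator hAm]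
    refine (lintegral_mono key).trans ?_
    rw [lintegral_finsetSum]
    · apply le_of_eq
      have : ∀ j ∈ Finset.range (N + 1), ∫⁻ y, A.indicator g (y - ((j : ℝ) * t) • e) = ∫⁻ y, A.indicator g y :=
        fun j _ => lintegral_sub_right_eq_self _ _
      rw [Finset.sum_congr rfl this]
      simp
    · intro j _
      exact (hg.indicator hAm).comp (by fun_prop)
  calc _ ≤ ENNReal.ofReal t * (((N + 1 : ℕ) : ℝ≥0∞) * ∫⁻ x in A, g x) := by gcongr
    _ = ENNReal.ofReal (((N : ℝ) + 1) * t) * ∫⁻ x in A, g x := by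
        rw [← mul_assoc, mul_comm ((N : ℝ) + 1), ENNReal.ofReal_mul ht.le]
        congr 2
        rw [← ENNReal.ofReal_natCast]
        push_cast
        rfl
    _ ≤ 1 * ∫⁻ x in A, g x := by
        gcongr
        exact ENNReal.ofReal_le_one.2 hNle
    _ = _ := one_mul _

lemma wVol_pos {n : ℕ} (α : ℝ) (S : Set (Euc n)) (hS : IsOpenConvexCone S)
    (w : Euc n → ℝ) (hw : IsAdmissibleWeight S α w) (r : ℝ) (hr : 0 < r)
    (g : Euc n → ℝ≥0∞) (hg : Measurable g) (hgw : ∀ x ∈ S, g x = ENNReal.ofReal (w x)) :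
    0 < ∫⁻ x in ball (0 : Euc n) r ∩ S, g x := by
  obtain ⟨hc, h0, ⟨x0, hx0, hx0w⟩, hhom, -⟩ := hw
  have hex : ∃ x ∈ S, w x ≠ 0 := by
    by_contra hcon
    push Not at hcon
    have : EqOn w (fun _ => 0) S := hcon
    exact hx0w (this.of_subset_closure hc continuousOn_const subset_closure subset_rfl hx0)
  obtain ⟨x, hxS, hxw⟩ := hex
  rw [setLIntegral_pos_iff hg]
  have hopen : IsOpen (ball (0 : Euc n) r ∩ (S ∩ w ⁻¹' {0}ᶜ)) :=
    isOpen_ball.inter ((hc.mono subset_closure).isOpen_inter_preimage hS.1 isOpen_compl_singleton)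
  have hnon : (ball (0 : Euc n) r ∩ (S ∩ w ⁻¹' {0}ᶜ)).Nonempty := by
    set t := r / (2 * (‖x‖ + 1)) with ht
    have hnx : 0 < ‖x‖ + 1 := by positivity
    have htp : 0 < t := by positivity
    refine ⟨t • x, ?_, hS.2.2 x hxS t htp, ?_⟩
    · rw [mem_ball_zero_iff, norm_smul, Real.norm_of_nonneg htp.le]
      have : t * (‖x‖ + 1) = r / 2 := by rw [ht]; field_simp
      nlinarith
    · simp only [mem_preimage, mem_compl_iff, mem_singleton_iff]
      rw [hhom x (subset_closure hxS) t htp]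
      exact mul_ne_zero (Real.rpow_pos_of_pos htp _).ne' hxw
  refine (hopen.measure_pos volume hnon).trans_le (measure_mono ?_)
  rintro y ⟨hy1, hy2, hy3⟩
  refine ⟨?_, hy1, hy2⟩
  rw [Function.mem_support, hgw y hy2]
  have := h0 y (subset_closure hy2)
  have h3 : w y ≠ 0 := hy3
  exact (ENNReal.ofReal_pos.2 (lt_of_le_of_ne this h3.symm)).ne'

set_option maxHeartbeats 1000000 in
/-- Linear growth of the weighted volume of the unit ball translated in a constancy
direction of the weight that almost belongs to the cone. -/
theorem stmt_14 {n k : ℕ} (hn : 1 ≤ n) (hk : k < n) (α : ℝ) (hα : 0 < α)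
    (S : Set (Euc n)) (hS : IsOpenConvexCone S)
    (hSL : ∀ x ∈ S, ∀ v ∈ linSpan n k, x + v ∈ S)
    (hNoLine : ∀ p v : Euc n, (∀ t : ℝ, p + t • v ∈ S) → v ∈ linSpan n k)
    (w : Euc n → ℝ) (hw : IsAdmissibleWeight S α w) :
    ∃ c₁ : ℝ, 0 < c₁ ∧
      ∀ ξ ∈ constDirs S w k, ξ ≠ 0 → ‖ξ‖ < c₁ → infDist (‖ξ‖⁻¹ • ξ) S < c₁ →
        wVol w (ball (0 : Euc n) 1 ∩ S) + ENNReal.ofReal (c₁ * ‖ξ‖) ≤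
          wVol w (ball ξ 1 ∩ S) := by
  have hSm := hS.1.measurableSet
  have hne : S.Nonempty := by
    obtain ⟨x, hx, -⟩ := hw.2.2.1
    exact closure_nonempty_iff.1 ⟨x, hx⟩
  obtain ⟨η, hη, hηe⟩ := exists_eta S hS hne hNoLine
  -- density
  classical
  set g : Euc n → ℝ≥0∞ := S.indicator (fun x => ENNReal.ofReal (w x)) with hgdef
  have hg : Measurable g := by
    have hm : Measurable (S.piecewise w (fun _ => 0)) :=
      (hw.1.mono subset_closure).measurable_piecewise continuousOn_const hSm
    have : g = fun x => ENNReal.ofReal (S.piecewise w (fun _ => 0) x) := by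
      funext x
      by_cases hx : x ∈ S <;> simp [hgdef, hx]
    rw [this]
    exact hm.ennreal_ofReal
  have hgw : ∀ x ∈ S, g x = ENNReal.ofReal (w x) := fun x hx => indicator_of_mem hx _
  have hwg : ∀ E : Set (Euc n), MeasurableSet E → wVol w (E ∩ S) = ∫⁻ x in E ∩ S, g x := by
    intro E hE
    exact setLIntegral_congr_fun (hE.inter hSm) fun x hx => (hgw x hx.2).symm
  -- bound on w
  obtain ⟨M, hM⟩ : ∃ M : ℝ, ∀ x ∈ closedBall (0 : Euc n) 1 ∩ closure S, w x ≤ M := by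
    have hcomp : IsCompact (closedBall (0 : Euc n) 1 ∩ closure S) :=
      (isCompact_closedBall _ _).inter_right isClosed_closure
    obtain ⟨M, hM⟩ := hcomp.bddAbove_image (hw.1.mono inter_subset_right)
    exact ⟨M, fun x hx => hM (mem_image_of_mem _ hx)⟩
  set M' := max M 0 with hM'
  have hM'0 : 0 ≤ M' := le_max_right _ _
  -- inner ball
  obtain ⟨v, hv⟩ := hne
  obtain ⟨r, hr, hrS⟩ := Metric.isOpen_iff.1 hS.1 v hv
  -- positive mass
  set r0 := min (η / 4) (1 / 4) with hr0
  have hr0p : 0 < r0 := by positivity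
  obtain ⟨a, ha, haI⟩ : ∃ a : ℝ, 0 < a ∧ ENNReal.ofReal a ≤ ∫⁻ x in ball (0 : Euc n) r0 ∩ S, g x := by
    have hpos := wVol_pos α S hS w hw r0 hr0p g hg hgw
    obtain ⟨b, hb, hb2⟩ := ENNReal.lt_iff_exists_real_btwn.1 hpos
    exact ⟨b, ENNReal.ofReal_pos.1 hb2.1, hb2.2.le⟩
  set V := (volume (ball (0 : Euc n) 1 ∩ S)).toReal with hV
  have hVfin : volume (ball (0 : Euc n) 1 ∩ S) ≠ ⊤ :=
    ((measure_mono inter_subset_left).trans_lt measure_ball_lt_top).ne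
  have hV0 : 0 ≤ V := ENNReal.toReal_nonneg
  set C := M' * (n * (‖v‖ / r) * V) with hC
  have hC0 : 0 ≤ C := by positivity
  set D := ‖v‖ / r with hD
  have hD0 : 0 ≤ D := by positivity
  set c := min (min η (1 / 2)) (min (a / (C + 1)) (1 / (D + 1))) with hc
  have hc0 : 0 < c := by positivity
  have hcη : c ≤ η := (min_le_left _ _).trans (min_le_left _ _)
  have hc2 : c ≤ 1 / 2 := (min_le_left _ _).trans (min_le_right _ _)
  have hca : c * (C + 1) ≤ a := by
    rw [← le_div_iff₀ (by positivity)]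
    exact (min_le_right _ _).trans (min_le_left _ _)
  have hcD : c * (D + 1) ≤ 1 := by
    rw [← le_div_iff₀ (by positivity)]
    exact (min_le_right _ _).trans (min_le_right _ _)
  refine ⟨c, hc0, fun ξ hξ hξ0 hξc hξd => ?_⟩
  set t := ‖ξ‖ with ht
  have ht0 : 0 < t := norm_pos_iff.2 hξ0
  set e := t⁻¹ • ξ with he
  have hξe : ξ = t • e := by rw [he, smul_smul, mul_inv_cancel₀ ht0.ne', one_smul]
  have he1 : ‖e‖ = 1 := by
    rw [he, norm_smul, norm_inv, Real.norm_of_nonneg ht0.le, ← ht, inv_mul_cancel₀ ht0.ne']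
  have heperp : ∀ u ∈ linSpan n k, ⟪e, u⟫ = 0 := by
    intro u hu
    rw [he, real_inner_smul_left, hξ.1 u hu, mul_zero]
  have hconst : ∀ x ∈ S, ∀ s : ℝ, x + s • e ∈ S → g (x + s • e) = g x := by
    intro x hx s hs
    rw [hgw _ hs, hgw _ hx]
    have h : s • e = (s * t⁻¹) • ξ := by rw [he, smul_smul]
    rw [h] at hs ⊢
    rw [hξ.2 x hx _ hs]
  have hηn := hηe e he1 heperp (hξd.trans_le hcη)
  have hexit : ∀ y ∈ S, ‖y‖ < r0 → ∀ s : ℝ, 0 < s → y - s • e ∈ S → s < 1 / 4 := by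
    intro y hy hyr s hs hys
    have h1 : s⁻¹ • (y - s • e) ∈ S := hS.2.2 _ hys _ (inv_pos.2 hs)
    have h2 := infDist_le_dist_of_mem (x := -e) h1
    have h3 : dist (-e) (s⁻¹ • (y - s • e)) = s⁻¹ * ‖y‖ := by
      rw [dist_comm, dist_eq_norm, smul_sub, smul_smul, inv_mul_cancel₀ hs.ne', one_smul]
      simp [norm_smul, abs_of_pos hs]
    rw [h3] at h2
    have h4 : η < s⁻¹ * ‖y‖ := hηn.trans_le h2
    have h5 : η * s < ‖y‖ := by
      have := mul_lt_mul_of_pos_right h4 hs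
      rwa [mul_comm (s⁻¹), mul_assoc, inv_mul_cancel₀ hs.ne', mul_one] at this
    have h6 : ‖y‖ < η / 4 := hyr.trans_le (min_le_left _ _)
    by_contra hcon
    nlinarith
  have hcov := cover S hSm g hg e he1 t r0 ht0 (hξc.trans_le hc2) (min_le_right _ _) hconst hexit
  set A : Set (Euc n) := {z | z ∈ S ∧ ‖z‖ < 1 / 2 ∧ z - t • e ∉ S} with hA
  have hAlow : ENNReal.ofReal (t * a) ≤ ∫⁻ x in A, g x := by
    rw [ENNReal.ofReal_mul ht0.le]
    exact le_trans (by gcongr) hcov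
  -- splitting
  set T : Set (Euc n) := {x | x + ξ ∈ S} with hT
  have hTm : MeasurableSet T :=
    (hS.1.preimage (by fun_prop : Continuous fun x : Euc n => x + ξ)).measurableSet
  have hBm : MeasurableSet (ball (0 : Euc n) 1 ∩ S) := measurableSet_ball.inter hSm
  -- bad part
  obtain ⟨e', he'S, hee'⟩ := (infDist_lt_iff ⟨v, hv⟩).1 hξd
  have hbad : ∫⁻ x in (ball (0 : Euc n) 1 ∩ S) \ T, g x ≤ ENNReal.ofReal (c * C * t) := by
    set s := t * c / r with hs
    have hs0 : 0 < s := by positivity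
    have hsv : s * ‖v‖ = t * c * D := by rw [hs, hD]; ring
    have hsv1 : s * ‖v‖ < 1 := by
      rw [hsv]
      have : c * D < 1 := by nlinarith
      have : 0 ≤ c * D := by positivity
      nlinarith
    have hsub : (ball (0 : Euc n) 1 ∩ S) \ T ⊆ {x | x ∈ ball (0 : Euc n) 1 ∩ S ∧ x - s • v ∉ S} := by
      rintro x ⟨hx, hxT⟩
      refine ⟨hx, fun hcon => hxT ?_⟩
      -- x + ξ = (x - s v) + s (v + (r/c) (e - e')) + t e'
      have h1 : v + (r / c) • (e - e') ∈ S := by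
        apply hrS
        rw [mem_ball, dist_eq_norm, add_sub_cancel_left, norm_smul, Real.norm_of_nonneg (by positivity),
          ← dist_eq_norm]
        calc r / c * dist e e' < r / c * c := by gcongr
          _ = r := by field_simp
      have h2 := cone_add hS (cone_add hS hcon (hS.2.2 _ h1 s hs0)) (hS.2.2 _ he'S t ht0)
      change x + ξ ∈ S
      convert h2 using 1
      have h3 : s * (r / c) = t := by rw [hs]; field_simp
      rw [smul_add, smul_smul, h3, smul_sub, ← hξe]
      abel
    calc ∫⁻ x in (ball (0 : Euc n) 1 ∩ S) \ T, g x
        ≤ ∫⁻ x in (ball (0 : Euc n) 1 ∩ S) \ T, ENNReal.ofReal M' := by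
          apply setLIntegral_mono measurable_const
          rintro x ⟨⟨hx1, hx2⟩, -⟩
          rw [hgw x hx2]
          exact ENNReal.ofReal_le_ofReal ((hM x ⟨ball_subset_closedBall hx1, subset_closure hx2⟩).trans (le_max_left _ _))
      _ = ENNReal.ofReal M' * volume ((ball (0 : Euc n) 1 ∩ S) \ T) := by simp
      _ ≤ ENNReal.ofReal M' * (ENNReal.ofReal (n * (s * ‖v‖)) * volume (ball (0 : Euc n) 1 ∩ S)) := by
          gcongr
          exact (measure_mono hsub).trans (layer S hS v hv s hs0 hsv1)
      _ = ENNReal.ofReal (c * C * t) := by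
          rw [← ENNReal.ofReal_toReal hVfin, ← hV, ← ENNReal.ofReal_mul (by positivity),
            ← ENNReal.ofReal_mul hM'0]
          congr 1
          rw [hsv, hC]
          ring
  -- good part by translation
  set P : Set (Euc n) := {z | z ∈ ball ξ 1 ∩ S ∧ z - ξ ∈ S} with hP
  have hPm : MeasurableSet P :=
    (measurableSet_ball.inter hSm).inter
      (hS.1.preimage (by fun_prop : Continuous fun x : Euc n => x - ξ)).measurableSet
  have hgood : ∫⁻ x in (ball (0 : Euc n) 1 ∩ S) ∩ T, g x = ∫⁻ x in P, g x := by
    rw [← lintegral_indicator (hBm.inter hTm), ← lintegral_indicator hPm,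
      ← lintegral_add_right_eq_self (P.indicator g) ξ]
    congr 1
    funext x
    have hiff : x + ξ ∈ P ↔ x ∈ (ball (0 : Euc n) 1 ∩ S) ∩ T := by
      simp only [hP, hT, mem_ofPred_eq, mem_inter_iff, mem_ball, dist_eq_norm, add_sub_cancel_right, sub_zero]
      tauto
    by_cases hx : x ∈ (ball (0 : Euc n) 1 ∩ S) ∩ T
    · rw [indicator_of_mem hx, indicator_of_mem (hiff.2 hx)]
      have := hconst x hx.1.2 t (by rw [← hξe]; exact hx.2)
      rw [← hξe] at this
      exact this.symm
    · rw [indicator_of_notMem hx, indicator_of_notMem (fun h => hx (hiff.1 h))]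
  have hAm : MeasurableSet A := by
    refine hSm.inter (MeasurableSet.inter ?_ ?_)
    · exact measurableSet_lt measurable_norm measurable_const
    · exact ((by fun_prop : Measurable fun z : Euc n => z - t • e) hSm).compl
  have hdisj : Disjoint P A := by
    rw [Set.disjoint_left]
    rintro z hz ⟨-, -, hz2⟩
    exact hz2 (by rw [← hξe]; exact hz.2)
  have hsubPA : P ∪ A ⊆ ball ξ 1 ∩ S := by
    rintro z (hz | ⟨hz1, hz2, -⟩)
    · exact hz.1
    · refine ⟨?_, hz1⟩
      rw [mem_ball, dist_eq_norm]
      calc ‖z - ξ‖ ≤ ‖z‖ + ‖ξ‖ := norm_sub_le _ _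
        _ < 1 := by rw [← ht]; linarith
  rw [hwg _ measurableSet_ball, hwg _ measurableSet_ball]
  calc (∫⁻ x in ball (0 : Euc n) 1 ∩ S, g x) + ENNReal.ofReal (c * t)
      = ((∫⁻ x in (ball (0 : Euc n) 1 ∩ S) ∩ T, g x) + ∫⁻ x in (ball (0 : Euc n) 1 ∩ S) \ T, g x)
        + ENNReal.ofReal (c * t) := by rw [lintegral_inter_add_sdiff _ _ hTm]
    _ ≤ ((∫⁻ x in P, g x) + ENNReal.ofReal (c * C * t)) + ENNReal.ofReal (c * t) := by
        rw [hgood]; gcongr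
    _ = (∫⁻ x in P, g x) + ENNReal.ofReal (c * C * t + c * t) := by
        rw [add_assoc, ← ENNReal.ofReal_add (by positivity) (by positivity)]
    _ ≤ (∫⁻ x in P, g x) + ∫⁻ x in A, g x := by
        gcongr
        refine (ENNReal.ofReal_le_ofReal ?_).trans hAlow
        nlinarith
    _ = ∫⁻ x in P ∪ A, g x := (lintegral_union hAm hdisj).symm
    _ ≤ _ := lintegral_mono_set hsubPA
end
end

section
/- There exist constants ε₀ > 0 and C > 0, depending only on n and α, such that the following holds. Let E ⊆ Σ be a bounded open set with smooth boundary such that w(E ∩ B_{1/2}) ≥ (1/2) w(B_{1/2} ∩ Σ). Then for every x₀ ∈ ℝⁿ with |x₀| ≤ ε₀ one has w( E Δ (B₁(x₀) ∩ Σ) ) ≤ C ∫_{∂E ∩ Σ} | |x − x₀| − 1 | w(x) dH^{n−1}(x). -/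
open MeasureTheory Metric Set
open scoped RealInnerProductSpace ENNReal NNReal Topology

noncomputable section

def HasSmoothBoundary {n : ℕ} (E : Set (Euc n)) : Prop :=
  ∃ f : Euc n → ℝ, ContDiff ℝ (⊤ : ℕ∞) f ∧ E = {x | f x < 0} ∧
    frontier E = {x | f x = 0} ∧ ∀ x ∈ frontier E, fderiv ℝ f x ≠ 0

/-- Points obtained from `A` by moving along rays from `c` by at most `L`. -/
def raySet {n : ℕ} (c : Euc n) (L : ℝ) (A : Set (Euc n)) : Set (Euc n) :=
  {y | ∃ z ∈ A, ∃ s : ℝ, 0 ≤ s ∧ s ≤ 4 ∧ y = c + s • (z - c) ∧ ‖y - z‖ ≤ L}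

lemma raySet_vol_aux {m : ℕ} (c z : Euc (m+1)) (L r : ℝ) (hL : 0 ≤ L) (hr : 0 < r)
    (A : Set (Euc (m+1))) (hA : A ⊆ closedBall z r) :
    volume (raySet c L A) ≤
      ENNReal.ofReal (5 ^ (m+1) * (2 * L + 11 * r) * r ^ m) * volume (ball (0 : Euc (m+1)) 1) := by
  set T := L + 4 * r with hT
  set N := ⌈T / r⌉₊ with hN
  set u : Euc (m+1) := ‖z - c‖⁻¹ • (z - c) with hu
  have hT0 : 0 ≤ T := by positivity
  have hunorm : ‖u‖ ≤ 1 := by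
    rw [hu, norm_smul, norm_inv, norm_norm]
    exact inv_mul_le_one
  have hcu : z - c = ‖z - c‖ • u := by
    by_cases h : z - c = 0
    · simp [h]
    · rw [hu, smul_smul, mul_inv_cancel₀ (norm_ne_zero_iff.2 h), one_smul]
  have hsub : raySet c L A ⊆
      ⋃ k ∈ Finset.range (2 * N + 1), closedBall (z + (((k:ℝ) - N) * r) • u) (5 * r) := by
    rintro y ⟨z', hz', s, hs0, hs4, hy, hyz⟩
    have hzz : ‖z' - z‖ ≤ r := by simpa [dist_eq_norm] using hA hz'
    set τ := (s - 1) * ‖z - c‖ with hτ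
    have h1 : ‖y - (z + τ • u)‖ ≤ 4 * r := by
      have : y - (z + τ • u) = s • (z' - z) := by
        have h2 : τ • u = (s - 1) • (z - c) := by rw [hτ, mul_smul, ← hcu]
        rw [h2, hy]; module
      rw [this, norm_smul, Real.norm_of_nonneg hs0]
      exact mul_le_mul hs4 hzz (norm_nonneg _) (by norm_num)
    have h2 : |τ| ≤ T := by
      have e1 : y - z' = (s - 1) • (z' - c) := by rw [hy]; module
      have e2 : (s - 1) • (z - c) = (s - 1) • (z' - c) - (s - 1) • (z' - z) := by module
      have e3 : |s - 1| ≤ 4 := abs_le.2 ⟨by linarith, by linarith⟩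
      calc |τ| = ‖(s - 1) • (z - c)‖ := by rw [hτ, abs_mul, abs_norm, norm_smul, Real.norm_eq_abs]
        _ ≤ ‖(s - 1) • (z' - c)‖ + ‖(s - 1) • (z' - z)‖ := by rw [e2]; exact norm_sub_le _ _
        _ ≤ L + 4 * r := by
          rw [← e1, norm_smul (s-1) (z' - z), Real.norm_eq_abs]
          exact add_le_add hyz (mul_le_mul e3 hzz (norm_nonneg _) (by norm_num))
    have hNT : T ≤ N * r := by
      have := Nat.le_ceil (T / r)
      rwa [div_le_iff₀ hr] at this
    obtain ⟨h2a, h2b⟩ := abs_le.1 h2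
    have h3 : 0 ≤ (τ + N * r) / r := div_nonneg (by linarith) hr.le
    refine mem_iUnion₂.2 ⟨⌊(τ + N * r) / r⌋₊, ?_, ?_⟩
    · rw [Finset.mem_range, Nat.lt_succ_iff]
      apply Nat.floor_le_of_le
      rw [div_le_iff₀ hr]; push_cast; linarith
    · have f1 := Nat.floor_le h3
      have f2 := Nat.lt_floor_add_one ((τ + N * r) / r)
      set k := (⌊(τ + N * r) / r⌋₊ : ℝ)
      rw [le_div_iff₀ hr] at f1
      rw [div_lt_iff₀ hr] at f2
      rw [mem_closedBall, dist_eq_norm]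
      have e : y - (z + ((k - N) * r) • u) = (y - (z + τ • u)) + (τ - (k - N) * r) • u := by module
      rw [e]
      refine (norm_add_le _ _).trans ?_
      have : ‖(τ - (k - N) * r) • u‖ ≤ r * 1 := by
        rw [norm_smul, Real.norm_eq_abs]
        refine mul_le_mul ?_ hunorm (norm_nonneg _) hr.le
        rw [abs_le]; constructor <;> nlinarith
      linarith
  have hNle : (N : ℝ) ≤ T / r + 1 := (Nat.ceil_lt_add_one (div_nonneg hT0 hr.le)).le
  calc volume (raySet c L A) ≤ _ := measure_mono hsub
    _ ≤ ∑ k ∈ Finset.range (2 * N + 1), volume (closedBall (z + (((k:ℝ) - N) * r) • u) (5 * r)) :=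
        measure_biUnion_finset_le _ _
    _ = (2 * N + 1 : ℕ) * (ENNReal.ofReal ((5 * r) ^ (m+1)) * volume (ball (0 : Euc (m+1)) 1)) := by
        simp [Measure.addHaar_closedBall _ _ (show (0:ℝ) ≤ 5 * r by positivity)]
    _ = ENNReal.ofReal ((2 * N + 1 : ℕ) * (5 * r) ^ (m+1)) * volume (ball (0 : Euc (m+1)) 1) := by
        rw [ENNReal.ofReal_mul (by positivity), ENNReal.ofReal_natCast, mul_assoc]
    _ ≤ _ := by
        refine mul_le_mul_left (ENNReal.ofReal_le_ofReal ?_) _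
        have : (((2 * N + 1 : ℕ) : ℝ)) * r ≤ 2 * L + 11 * r := by
          push_cast
          have h := mul_le_mul_of_nonneg_right hNle hr.le
          rw [add_mul, div_mul_cancel₀ _ hr.ne'] at h
          nlinarith
        calc (((2 * N + 1 : ℕ) : ℝ)) * (5 * r) ^ (m+1)
            = 5 ^ (m+1) * ((((2 * N + 1 : ℕ) : ℝ)) * r) * r ^ m := by ring
          _ ≤ _ := by gcongr

lemma raySet_vol_aux2 {m : ℕ} (c : Euc (m+1)) (L δ : ℝ) (hL : 0 ≤ L) (hδ : 0 < δ)
    (A : Set (Euc (m+1))) (hA : ediam A ≤ ENNReal.ofReal δ) :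
    volume (raySet c L A) ≤
      ENNReal.ofReal (5 ^ (m+1) * (2 * L + 11 * (2 * δ))) * volume (ball (0 : Euc (m+1)) 1)
       * ⨆ _ : A.Nonempty, ediam A ^ (m : ℝ) := by
  rcases A.eq_empty_or_nonempty with rfl | hne
  · simp [raySet]
  obtain ⟨z, hz⟩ := hne
  have hne : A.Nonempty := ⟨z, hz⟩
  simp only [hne, iSup_pos, ENNReal.rpow_natCast]
  have hfin : ediam A ≠ ∞ := ne_top_of_le_ne_top ENNReal.ofReal_ne_top hA
  set d := (ediam A).toReal with hd
  have hdd : ediam A = ENNReal.ofReal d := (ENNReal.ofReal_toReal hfin).symm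
  have hd0 : 0 ≤ d := ENNReal.toReal_nonneg
  have hdδ : d ≤ δ := ENNReal.toReal_le_of_le_ofReal hδ.le hA
  have key : ∀ r, d < r → r ≤ 2 * δ → volume (raySet c L A) ≤
      ENNReal.ofReal (5 ^ (m+1) * (2 * L + 11 * (2 * δ)) * r ^ m)
        * volume (ball (0 : Euc (m+1)) 1) := by
    intro r hr hr2
    refine (raySet_vol_aux c z L r hL (hd0.trans_lt hr) A ?_).trans ?_
    · intro x hx
      have : edist x z ≤ ENNReal.ofReal d := hdd ▸ edist_le_ediam_of_mem hx hz
      rw [edist_dist, ENNReal.ofReal_le_ofReal_iff hd0] at this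
      exact this.trans hr.le
    · have : 0 < r := hd0.trans_lt hr
      gcongr
  have hcont : Filter.Tendsto (fun r : ℝ => ENNReal.ofReal (5 ^ (m+1) * (2 * L + 11 * (2 * δ)) * r ^ m)
        * volume (ball (0 : Euc (m+1)) 1)) (𝓝[>] d)
        (𝓝 (ENNReal.ofReal (5 ^ (m+1) * (2 * L + 11 * (2 * δ)) * d ^ m)
        * volume (ball (0 : Euc (m+1)) 1))) := by
    refine Filter.Tendsto.mono_left ?_ nhdsWithin_le_nhds
    refine ENNReal.Tendsto.mul_const ?_ (Or.inr measure_ball_lt_top.ne)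
    exact ENNReal.tendsto_ofReal (Continuous.tendsto (by fun_prop) d)
  have := ge_of_tendsto hcont (b := volume (raySet c L A)) (by
    filter_upwards [Ioc_mem_nhdsGT (show d < 2 * δ by linarith)] with r hr
    exact key r hr.1 hr.2)
  refine this.trans (le_of_eq ?_)
  rw [hdd, ENNReal.ofReal_mul (by positivity), ENNReal.ofReal_pow hd0]
  ring

/-- The dimensional constant. -/
def tubeC (m : ℕ) : ℝ≥0∞ := ENNReal.ofReal (3 * 5 ^ (m+1)) * volume (ball (0 : Euc (m+1)) 1)

lemma tubeC_ne_top (m : ℕ) : tubeC m ≠ ∞ :=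
  ENNReal.mul_ne_top ENNReal.ofReal_ne_top measure_ball_lt_top.ne

lemma raySet_vol {m : ℕ} (c : Euc (m+1)) (L : ℝ) (hL : 0 < L) (A : Set (Euc (m+1))) :
    volume (raySet c L A) ≤ tubeC m * ENNReal.ofReal L * μH[(m : ℝ)] A := by
  set δ := L / 22 with hδ
  have hδ0 : 0 < δ := by positivity
  have hK : ENNReal.ofReal (5 ^ (m+1) * (2 * L + 11 * (2 * δ))) * volume (ball (0 : Euc (m+1)) 1)
      = tubeC m * ENNReal.ofReal L := by
    rw [tubeC, mul_right_comm, ← ENNReal.ofReal_mul (by positivity)]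
    congr 2
    rw [hδ]; ring
  have hK0 : tubeC m * ENNReal.ofReal L ≠ 0 := by
    refine mul_ne_zero (mul_ne_zero ?_ ?_) ?_
    · simp only [ne_eq, ENNReal.ofReal_eq_zero, not_le]; positivity
    · exact (measure_ball_pos _ _ one_pos).ne'
    · simpa using hL
  have hKt : tubeC m * ENNReal.ofReal L ≠ ∞ := ENNReal.mul_ne_top (tubeC_ne_top m) ENNReal.ofReal_ne_top
  rw [Measure.hausdorffMeasure_apply]
  have : (⨅ (t : ℕ → Set (Euc (m+1))) (_ : A ⊆ ⋃ n, t n) (_ : ∀ n, ediam (t n) ≤ ENNReal.ofReal δ),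
          ∑' n, ⨆ _ : (t n).Nonempty, ediam (t n) ^ (m:ℝ)) ≤ _ :=
    le_iSup₂ (f := fun (r : ℝ≥0∞) (_ : 0 < r) =>
      ⨅ (t : ℕ → Set (Euc (m+1))) (_ : A ⊆ ⋃ n, t n) (_ : ∀ n, ediam (t n) ≤ r),
          ∑' n, ⨆ _ : (t n).Nonempty, ediam (t n) ^ (m:ℝ)) (ENNReal.ofReal δ)
          (ENNReal.ofReal_pos.2 hδ0)
  refine le_trans ?_ (mul_le_mul_right this _)
  simp only [ENNReal.mul_iInf_of_ne hK0 hKt, ← ENNReal.tsum_mul_left]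
  refine le_iInf fun t => le_iInf fun hA => le_iInf fun ht => ?_
  have hsub : raySet c L A ⊆ ⋃ n, raySet c L (t n) := by
    rintro y ⟨z, hz, h⟩
    obtain ⟨i, hi⟩ := mem_iUnion.1 (hA hz)
    exact mem_iUnion.2 ⟨i, z, hi, h⟩
  refine (measure_mono hsub).trans ((measure_iUnion_le _).trans ?_)
  refine ENNReal.tsum_le_tsum fun i => ?_
  rw [← hK]
  exact raySet_vol_aux2 c L δ hL.le hδ0 (t i) (ht i)

lemma layer_s16 {X Y : Type*} [MeasurableSpace X] [MeasurableSpace Y] (μ : Measure Y) (m : Measure X)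
    (R : Y → X → Prop) (φ : X → ℝ) (hφ : Measurable φ) (A : Set X) (hA : MeasurableSet A)
    (hφ0 : ∀ x ∈ A, 0 ≤ φ x) (hm : m A ≠ ∞)
    (H : ∀ B ⊆ A, MeasurableSet B → ∀ c : ℝ, 0 < c → (∀ z ∈ B, φ z ≤ c) →
      μ {y | ∃ z ∈ B, R y z} ≤ ENNReal.ofReal c * m B) :
    μ {y | ∃ z ∈ A, R y z} ≤ 2 * ∫⁻ x in A, ENNReal.ofReal (φ x) ∂m := by
  set B0 := A ∩ φ ⁻¹' {0} with hB0
  set B : ℤ → Set X := fun k => A ∩ φ ⁻¹' (Ico ((2:ℝ) ^ k) (2 ^ (k+1))) with hB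
  have hBm : ∀ k, MeasurableSet (B k) := fun k => hA.inter (hφ measurableSet_Ico)
  have h0 : μ {y | ∃ z ∈ B0, R y z} = 0 := by
    have hle : ∀ c : ℝ, 0 < c → μ {y | ∃ z ∈ B0, R y z} ≤ ENNReal.ofReal c * m A := fun c hc =>
      (H B0 inter_subset_left (hA.inter (hφ (measurableSet_singleton 0))) c hc
        (by rintro z ⟨_, hz⟩; rw [mem_preimage, mem_singleton_iff] at hz; rw [hz]; exact hc.le)).trans
        (by gcongr; exact inter_subset_left)
    have ht : Filter.Tendsto (fun c : ℝ => ENNReal.ofReal c * m A) (𝓝[>] 0)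
        (𝓝 (ENNReal.ofReal 0 * m A)) := by
      refine Filter.Tendsto.mono_left ?_ nhdsWithin_le_nhds
      exact ENNReal.Tendsto.mul_const (ENNReal.tendsto_ofReal Filter.tendsto_id) (Or.inr hm)
    have := ge_of_tendsto ht (b := μ {y | ∃ z ∈ B0, R y z}) (by
      filter_upwards [self_mem_nhdsWithin] with c hc using hle c hc)
    simpa using this
  have hsub : {y | ∃ z ∈ A, R y z} ⊆ {y | ∃ z ∈ B0, R y z} ∪ ⋃ k, {y | ∃ z ∈ B k, R y z} := by
    rintro y ⟨z, hz, hR⟩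
    rcases (hφ0 z hz).eq_or_lt with h | h
    · exact Or.inl ⟨z, ⟨hz, h.symm⟩, hR⟩
    · obtain ⟨k, hk⟩ := exists_mem_Ico_zpow h (one_lt_two)
      exact Or.inr (mem_iUnion.2 ⟨k, z, ⟨hz, hk⟩, hR⟩)
  have hdisj : Pairwise (Function.onFun Disjoint B) := by
    intro i j hij
    rw [Function.onFun, Set.disjoint_left]
    rintro x ⟨_, h1⟩ ⟨_, h2⟩
    apply hij
    have a1 := (zpow_lt_zpow_iff_right₀ (one_lt_two (α := ℝ))).1 (h1.1.trans_lt h2.2)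
    have a2 := (zpow_lt_zpow_iff_right₀ (one_lt_two (α := ℝ))).1 (h2.1.trans_lt h1.2)
    omega
  calc μ {y | ∃ z ∈ A, R y z} ≤ _ := measure_mono hsub
    _ ≤ μ {y | ∃ z ∈ B0, R y z} + μ (⋃ k, {y | ∃ z ∈ B k, R y z}) := measure_union_le _ _
    _ ≤ 0 + ∑' k, μ {y | ∃ z ∈ B k, R y z} := by
      rw [h0]; gcongr; exact measure_iUnion_le _
    _ ≤ ∑' k, 2 * ∫⁻ x in B k, ENNReal.ofReal (φ x) ∂m := by
      rw [zero_add]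
      refine ENNReal.tsum_le_tsum fun k => ?_
      refine (H (B k) inter_subset_left (hBm k) (2 ^ (k+1)) (by positivity)
        (fun z hz => hz.2.2.le)).trans ?_
      rw [zpow_add_one₀ two_ne_zero, mul_comm ((2:ℝ)^k), ENNReal.ofReal_mul (by norm_num), mul_assoc]
      rw [show ENNReal.ofReal 2 = 2 by simp]
      gcongr
      rw [← setLIntegral_const]
      refine setLIntegral_mono' (hBm k) fun x hx => ENNReal.ofReal_le_ofReal hx.2.1
    _ = 2 * ∫⁻ x in ⋃ k, B k, ENNReal.ofReal (φ x) ∂m := by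
      rw [ENNReal.tsum_mul_left, lintegral_iUnion hBm hdisj]
    _ ≤ _ := by
      gcongr
      exact iUnion_subset fun k => inter_subset_left

lemma master {m : ℕ} (v g : Euc (m+1) → ℝ) (hv : Measurable v) (hg : Measurable g)
    (A : Set (Euc (m+1))) (hA : MeasurableSet A) (hfin : μH[(m:ℝ)] A ≠ ∞)
    (hv0 : ∀ x ∈ A, 0 ≤ v x) (hg0 : ∀ x ∈ A, 0 ≤ g x) (M : ℝ) (hgM : ∀ x ∈ A, g x ≤ M)
    (c : Euc (m+1)) (κ κ' : ℝ) (hκ : 0 < κ) (hκ' : 0 < κ')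
    (R : Euc (m+1) → Euc (m+1) → Prop)
    (hR : ∀ y, ∀ z ∈ A, R y z → ∃ s : ℝ, 0 ≤ s ∧ s ≤ 4 ∧ y = c + s • (z - c) ∧
      ‖y - z‖ ≤ κ * g z ∧ v y ≤ κ' * v z) :
    volume.withDensity (fun x => ENNReal.ofReal (v x)) {y | ∃ z ∈ A, R y z} ≤
      4 * (tubeC m * ENNReal.ofReal κ * ENNReal.ofReal κ') *
        ∫⁻ x in A, ENNReal.ofReal (g x * v x) ∂μH[(m:ℝ)] := by
  set μ := volume.withDensity (fun x : Euc (m+1) => ENNReal.ofReal (v x)) with hμ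
  set K := tubeC m * ENNReal.ofReal κ * ENNReal.ofReal κ' with hK
  have hKt : K ≠ ∞ := ENNReal.mul_ne_top (ENNReal.mul_ne_top (tubeC_ne_top m) ENNReal.ofReal_ne_top)
    ENNReal.ofReal_ne_top
  set H : Measure (Euc (m+1)) := K • μH[(m:ℝ)] with hH
  have base : ∀ B ⊆ A, ∀ a : ℝ, 0 < a → ∀ b : ℝ, 0 < b → (∀ z ∈ B, g z ≤ a) → (∀ z ∈ B, v z ≤ b) →
      μ {y | ∃ z ∈ B, R y z} ≤ ENNReal.ofReal a * ENNReal.ofReal b * H B := by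
    intro B hB a ha b hb hga hvb
    have hs : {y | ∃ z ∈ B, R y z} ⊆ raySet c (κ * a) B := by
      rintro y ⟨z, hz, h⟩
      obtain ⟨s, h1, h2, h3, h4, -⟩ := hR y z (hB hz) h
      exact ⟨z, hz, s, h1, h2, h3, h4.trans (by gcongr; exact hga z hz)⟩
    have h1 : μ {y | ∃ z ∈ B, R y z} ≤ ENNReal.ofReal (κ' * b) * volume {y | ∃ z ∈ B, R y z} := by
      rw [hμ, withDensity_apply', ← setLIntegral_const]
      refine setLIntegral_mono measurable_const ?_
      rintro y ⟨z, hz, h⟩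
      obtain ⟨s, -, -, -, -, h5⟩ := hR y z (hB hz) h
      exact ENNReal.ofReal_le_ofReal (h5.trans (by gcongr; exact hvb z hz))
    refine h1.trans ((mul_le_mul_right ((measure_mono hs).trans
      (raySet_vol c (κ * a) (by positivity) B)) _).trans (le_of_eq ?_))
    rw [hH, Measure.smul_apply, smul_eq_mul, hK, ENNReal.ofReal_mul hκ.le, ENNReal.ofReal_mul hκ'.le]
    ring
  have hHA : H A ≠ ∞ := by
    rw [hH, Measure.smul_apply, smul_eq_mul]; exact ENNReal.mul_ne_top hKt hfin
  set H2 : Measure (Euc (m+1)) := (2 : ℝ≥0∞) • H.withDensity (fun x => ENNReal.ofReal (g x)) with hH2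
  have step := layer_s16 μ H2 R v hv A hA hv0 ?_ ?_
  · refine step.trans (le_of_eq ?_)
    have hcomp : ∀ x ∈ A, ENNReal.ofReal (g x * v x) = ENNReal.ofReal (g x) * ENNReal.ofReal (v x) :=
      fun x hx => ENNReal.ofReal_mul (hg0 x hx)
    rw [setLIntegral_congr_fun hA hcomp, hH2, Measure.restrict_smul, lintegral_smul_measure,
      restrict_withDensity hA, lintegral_withDensity_eq_lintegral_mul _ hg.ennreal_ofReal hv.ennreal_ofReal,
      hH, Measure.restrict_smul, lintegral_smul_measure]
    simp only [smul_eq_mul, Pi.mul_apply]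
    ring
  · rw [hH2, Measure.smul_apply, smul_eq_mul, withDensity_apply _ hA]
    refine ENNReal.mul_ne_top (by simp) ?_
    refine ne_top_of_le_ne_top ?_ (setLIntegral_mono' (g := fun _ => ENNReal.ofReal M) hA
      (fun x hx => ENNReal.ofReal_le_ofReal (hgM x hx)))
    rw [setLIntegral_const]
    exact ENNReal.mul_ne_top ENNReal.ofReal_ne_top hHA
  · intro B hB hBm b hb hvb
    have := layer_s16 μ (ENNReal.ofReal b • H) R g hg B hBm (fun x hx => hg0 x (hB hx)) ?_ ?_
    · refine this.trans (le_of_eq ?_)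
      rw [Measure.restrict_smul, lintegral_smul_measure, hH2, Measure.smul_apply, withDensity_apply _ hBm]
      simp only [smul_eq_mul]; ring
    · rw [Measure.smul_apply, smul_eq_mul]
      exact ENNReal.mul_ne_top ENNReal.ofReal_ne_top (ne_top_of_le_ne_top hHA (measure_mono hB))
    · intro B' hB' hBm' a ha hga
      refine (base B' (hB'.trans hB) a ha b hb hga (fun z hz => hvb z (hB' hz))).trans (le_of_eq ?_)
      rw [Measure.smul_apply (ENNReal.ofReal b) H, smul_eq_mul, mul_assoc]

lemma hausdorff_levelset_finite {m : ℕ} (f : Euc (m+1) → ℝ) (hf : ContDiff ℝ (⊤ : ℕ∞) f)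
    (Z : Set (Euc (m+1))) (hZc : IsCompact Z) (hZ : ∀ x ∈ Z, f x = 0)
    (hd : ∀ x ∈ Z, fderiv ℝ f x ≠ 0) : μH[(m:ℝ)] Z ≠ ∞ := by
  refine (hZc.measure_lt_top_of_nhdsWithin fun z hz => ?_).ne
  have hstrict : HasStrictFDerivAt f (fderiv ℝ f z) z :=
    hf.contDiffAt.hasStrictFDerivAt (by simp)
  set ℓ := fderiv ℝ f z with hℓ
  have hℓ0 : (ℓ : Euc (m+1) →ₗ[ℝ] ℝ) ≠ 0 := by
    intro h
    apply hd z hz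
    ext x
    exact LinearMap.congr_fun h x
  set V : Submodule ℝ (Euc (m+1)) := LinearMap.ker (ℓ : Euc (m+1) →ₗ[ℝ] ℝ) with hV
  have hrank : Module.finrank ℝ V = m := by
    have := Module.Dual.finrank_ker_add_one_of_ne_zero (f := (ℓ : Euc (m+1) →ₗ[ℝ] ℝ)) hℓ0
    simp only [finrank_euclideanSpace, Fintype.card_fin] at this
    exact Nat.succ_injective this
  set P : Euc (m+1) →L[ℝ] V := V.orthogonalProjectionOnto with hP
  set T : Euc (m+1) →L[ℝ] V × ℝ := P.prod ℓ with hT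
  have hker : LinearMap.ker (T : Euc (m+1) →ₗ[ℝ] V × ℝ) = ⊥ := by
    rw [LinearMap.ker_eq_bot']
    intro x hx
    have h1 : P x = 0 := congrArg Prod.fst hx
    have h2 : ℓ x = 0 := congrArg Prod.snd hx
    have h3 : x ∈ V := h2
    have h4 := V.orthogonalProjectionOnto_mem_subspace_eq_self ⟨x, h3⟩
    have h5 : P x = ⟨x, h3⟩ := h4
    rw [h1] at h5
    exact (congrArg Subtype.val h5).symm
  obtain ⟨K, hK0, hK⟩ := LinearMap.exists_antilipschitzWith (T : Euc (m+1) →ₗ[ℝ] V × ℝ) hker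
  have hK0' : (0:ℝ) < K := hK0
  have hKn : ∀ x, ‖x‖ ≤ K * max ‖P x‖ ‖ℓ x‖ := by
    intro x
    have := hK.le_mul_dist x 0
    simpa [dist_eq_norm, hT, Prod.norm_def] using this
  have hev := hstrict.isLittleO.def (c := 1 / (2 * K)) (by positivity)
  rw [nhds_prod_eq] at hev
  obtain ⟨U, hU, hUP⟩ := (Filter.eventually_prod_self_iff
    (r := fun x y => ‖f x - f y - ℓ (x - y)‖ ≤ 1 / (2 * K) * ‖x - y‖)).1 hev
  set W := (U ∩ Z) ∩ ball z 1 with hW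
  have hWmem : W ∈ 𝓝[Z] z := by
    have : U ∩ ball z 1 ∈ 𝓝 z := Filter.inter_mem hU (ball_mem_nhds z one_pos)
    have h2 := inter_mem_nhdsWithin Z this
    filter_upwards [h2] with x hx using ⟨⟨hx.2.1, hx.1⟩, hx.2.2⟩
  refine ⟨W, hWmem, ?_⟩
  have hanti : AntilipschitzWith K (fun x : W => P x) := by
    refine AntilipschitzWith.of_le_mul_dist fun x y => ?_
    rw [Subtype.dist_eq, dist_eq_norm, dist_eq_norm, ← map_sub]
    have h1 := hUP x.1 x.2.1.1 y.1 y.2.1.1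
    simp only [hZ _ x.2.1.2, hZ _ y.2.1.2, sub_self, zero_sub, norm_neg] at h1
    have h2 := hKn (x.1 - y.1)
    rcases le_total ‖P (x.1 - y.1)‖ ‖ℓ (x.1 - y.1)‖ with h | h
    · rw [max_eq_right h] at h2
      have h3 : (K:ℝ) * ‖ℓ (x.1 - y.1)‖ ≤ K * (1 / (2 * K) * ‖x.1 - y.1‖) := by gcongr
      have h4 : (K:ℝ) * (1 / (2 * K) * ‖x.1 - y.1‖) = ‖x.1 - y.1‖ / 2 := by field_simp
      have h5 : ‖x.1 - y.1‖ ≤ 0 := by linarith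
      exact h5.trans (by positivity)
    · rwa [max_eq_left h] at h2
  have h1 := hanti.le_hausdorffMeasure_image (d := (m:ℝ)) (by positivity) univ
  have h2 : μH[(m:ℝ)] W = μH[(m:ℝ)] (univ : Set W) := by
    have h3 := (isometry_subtype_coe (s := W)).hausdorffMeasure_image (d := (m:ℝ))
      (Or.inl (by positivity)) univ
    rw [← h3]
    simp
  rw [h2]
  refine h1.trans_lt (ENNReal.mul_lt_top (by simp) ?_)
  have hHaar : (μH[(Module.finrank ℝ V : ℝ)] : Measure V).IsAddHaarMeasure := inferInstance
  rw [hrank] at hHaar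
  have hb : Bornology.IsBounded ((fun x : W => P x) '' univ) := by
    have : (fun x : W => P x) '' univ ⊆ P '' (ball z 1) := by
      rintro _ ⟨x, -, rfl⟩
      exact ⟨x, x.2.2, rfl⟩
    exact (P.lipschitz.isBounded_image isBounded_ball).subset this
  exact hb.measure_lt_top

lemma seg_zero {X : Type*} [AddCommGroup X] [Module ℝ X] [TopologicalSpace X]
    [ContinuousAdd X] [ContinuousSMul ℝ X] (f : X → ℝ) (hf : Continuous f) (p q : X)
    (a b : ℝ) (hab : a ≤ b) (h : (f (p + a • q) ≤ 0 ∧ 0 ≤ f (p + b • q)) ∨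
      (f (p + b • q) ≤ 0 ∧ 0 ≤ f (p + a • q))) :
    ∃ t ∈ Icc a b, f (p + t • q) = 0 := by
  have hc : ContinuousOn (fun t : ℝ => f (p + t • q)) (Icc a b) := by fun_prop
  rcases h with ⟨h1, h2⟩ | ⟨h1, h2⟩
  · exact intermediate_value_Icc hab hc ⟨h1, h2⟩
  · exact intermediate_value_Icc' hab hc ⟨h1, h2⟩

lemma isClosed_cross {m : ℕ} (f : Euc m → ℝ) (hf : Continuous f) (a b : ℝ) :
    IsClosed {p : Euc m × Euc m | ∃ t ∈ Icc a b, f (p.1 + t • (p.2 - p.1)) = 0} := by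
  have h1 : IsClosed {q : (Icc a b) × (Euc m × Euc m) |
      f (q.2.1 + (q.1 : ℝ) • (q.2.2 - q.2.1)) = 0} :=
    isClosed_eq (by fun_prop) continuous_const
  have h2 := isClosedMap_snd_of_compactSpace _ h1
  convert h2 using 1
  ext p
  constructor
  · rintro ⟨t, ht, h⟩; exact ⟨(⟨t, ht⟩, p), h, rfl⟩
  · rintro ⟨⟨t, p'⟩, h, rfl⟩; exact ⟨t, t.2, h⟩

lemma poincare {m : ℕ} (S : Set (Euc (m+1))) (hSo : IsOpen S) (hSc : Convex ℝ S)
    (v : Euc (m+1) → ℝ) (hv : Measurable v) (hv0 : ∀ x, 0 ≤ v x)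
    (κ' : ℝ) (hκ' : 0 < κ')
    (hconc : ∀ x ∈ S, ∀ y ∈ S, ∀ t : ℝ, 1 / 2 ≤ t → t ≤ 1 → v y ≤ κ' * v (x + t • (y - x)))
    (f : Euc (m+1) → ℝ) (hf : Continuous f) (hES : {x | f x < 0} ⊆ S)
    (hfin : μH[(m:ℝ)] {x | f x = 0} ≠ ∞)
    (μ : Measure (Euc (m+1))) (hμ : μ = volume.withDensity (fun x => ENNReal.ofReal (v x)))
    (hBfin : μ (ball 0 (1/2) ∩ S) ≠ ∞)
    (hhalf : μ (ball 0 (1/2) ∩ S) ≤ 2 * μ ({x | f x < 0} ∩ ball 0 (1/2))) :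
    μ ((S \ {x | f x < 0}) ∩ ball 0 (1/2)) ≤
      2 * (4 * (tubeC m * ENNReal.ofReal 1 * ENNReal.ofReal κ') *
        ∫⁻ x in {x | f x = 0} ∩ (ball 0 (1/2) ∩ S), ENNReal.ofReal (1 * v x) ∂μH[(m:ℝ)]) := by
  set B : Set (Euc (m+1)) := ball 0 (1/2) with hB
  set E := {x | f x < 0} with hE
  set A := {x | f x = 0} ∩ (B ∩ S) with hA
  set P := (4 * (tubeC m * ENNReal.ofReal 1 * ENNReal.ofReal κ') *
        ∫⁻ x in A, ENNReal.ofReal (1 * v x) ∂μH[(m:ℝ)]) with hP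
  have hEo : IsOpen E := isOpen_lt hf continuous_const
  have hAm : MeasurableSet A :=
    (isClosed_eq hf continuous_const).measurableSet.inter (isOpen_ball.inter hSo).measurableSet
  have hAfin : μH[(m:ℝ)] A ≠ ∞ := ne_top_of_le_ne_top hfin (measure_mono inter_subset_left)
  have hBc : Convex ℝ (B ∩ S) := (convex_ball _ _).inter hSc
  set X := E ∩ B with hX
  set Y := (S \ E) ∩ B with hY
  have hXm : MeasurableSet X := (hEo.inter isOpen_ball).measurableSet
  have hYm : MeasurableSet Y := (hSo.measurableSet.diff hEo.measurableSet).inter measurableSet_ball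
  have hXB : X ⊆ B ∩ S := fun x hx => ⟨hx.2, hES hx.1⟩
  have hYB : Y ⊆ B ∩ S := fun x hx => ⟨hx.2, hx.1.1⟩
  have hdisj : Disjoint X Y := Set.disjoint_left.2 fun x hx hy => hy.1.2 hx.1
  -- the key estimate: points visible from `c` beyond a crossing point
  have key : ∀ c ∈ B ∩ S, μ {y | y ∈ B ∩ S ∧ ∃ t ∈ Icc (1/2 : ℝ) 1, f (c + t • (y - c)) = 0} ≤ P := by
    intro c hc
    have hmaster := master v (fun _ => 1) hv measurable_const A hAm hAfin (fun x _ => hv0 x)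
      (fun _ _ => zero_le_one) 1 (fun _ _ => le_rfl) c 1 κ' one_pos hκ'
      (fun y z => y ∈ B ∩ S ∧ ∃ t ∈ Icc (1/2 : ℝ) 1, z = c + t • (y - c)) ?_
    · rw [← hμ] at hmaster
      refine (measure_mono ?_).trans hmaster
      rintro y ⟨hy, t, ht, h0⟩
      refine ⟨c + t • (y - c), ⟨h0, ?_⟩, hy, t, ht, rfl⟩
      exact hBc.add_smul_sub_mem hc hy ⟨by linarith [ht.1], ht.2⟩
    · rintro y z hz ⟨hy, t, ht, rfl⟩
      have ht0 : 0 < t := by linarith [ht.1]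
      refine ⟨t⁻¹, by positivity, ?_, ?_, ?_, ?_⟩
      · rw [inv_le_comm₀ ht0 (by norm_num)]; linarith [ht.1]
      · rw [add_sub_cancel_left, smul_smul, inv_mul_cancel₀ ht0.ne', one_smul]; abel
      · have e1 : y ∈ ball (0 : Euc (m+1)) (1/2) := hy.1
        have e2 : c + t • (y - c) ∈ ball (0 : Euc (m+1)) (1/2) := hz.2.1
        rw [mem_ball_zero_iff] at e1 e2
        have := norm_sub_le y (c + t • (y - c))
        linarith
      · exact hconc c hc.2 y hy.2 t ht.1 ht.2
  have hsf : SFinite μ := by rw [hμ]; infer_instance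
  set G1 := {p : Euc (m+1) × Euc (m+1) | ∃ t ∈ Icc (1/2 : ℝ) 1, f (p.1 + t • (p.2 - p.1)) = 0} with hG1
  set G2 := {p : Euc (m+1) × Euc (m+1) | ∃ t ∈ Icc (0 : ℝ) (1/2), f (p.1 + t • (p.2 - p.1)) = 0} with hG2
  have hG1m : MeasurableSet G1 := (isClosed_cross f hf _ _).measurableSet
  have hG2m : MeasurableSet G2 := (isClosed_cross f hf _ _).measurableSet
  have hcover : X ×ˢ Y ⊆ (G1 ∩ X ×ˢ Y) ∪ (G2 ∩ X ×ˢ Y) := by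
    rintro ⟨x, y⟩ ⟨hx, hy⟩
    have hx1 : f x < 0 := hx.1
    have hy1 : 0 ≤ f y := not_lt.1 hy.1.2
    obtain ⟨t, ht, h0⟩ := seg_zero f hf x (y - x) 0 1 zero_le_one
      (Or.inl ⟨by simpa using hx1.le, by simpa using hy1⟩)
    rcases le_total (1/2) t with h | h
    · exact Or.inl ⟨⟨t, ⟨h, ht.2⟩, h0⟩, hx, hy⟩
    · exact Or.inr ⟨⟨t, ⟨ht.1, h⟩, h0⟩, hx, hy⟩
  have e1 : (μ.prod μ) (G1 ∩ X ×ˢ Y) ≤ μ X * P := by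
    rw [Measure.prod_apply (hG1m.inter (hXm.prod hYm))]
    calc _ ≤ ∫⁻ x, X.indicator (fun _ => P) x ∂μ := by
          refine lintegral_mono fun x => ?_
          by_cases hx : x ∈ X
          · rw [indicator_of_mem hx]
            refine (measure_mono ?_).trans (key x (hXB hx))
            rintro y ⟨h1, h2⟩
            exact ⟨hYB h2.2, h1⟩
          · rw [indicator_of_notMem hx]
            have : Prod.mk x ⁻¹' (G1 ∩ X ×ˢ Y) = ∅ := by
              ext y; simp [hx]
            simp [this]
      _ = μ X * P := by rw [lintegral_indicator_const hXm, mul_comm]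
  have e2 : (μ.prod μ) (G2 ∩ X ×ˢ Y) ≤ μ Y * P := by
    rw [Measure.prod_apply_symm (hG2m.inter (hXm.prod hYm))]
    calc _ ≤ ∫⁻ x, Y.indicator (fun _ => P) x ∂μ := by
          refine lintegral_mono fun y => ?_
          by_cases hy : y ∈ Y
          · rw [indicator_of_mem hy]
            refine (measure_mono ?_).trans (key y (hYB hy))
            rintro x ⟨⟨t, ht, h1⟩, h2⟩
            refine ⟨hXB h2.1, 1 - t, ⟨by linarith [ht.2], by linarith [ht.1]⟩, ?_⟩
            rw [← h1]
            congr 1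
            module
          · rw [indicator_of_notMem hy]
            have : (fun x => (x, y)) ⁻¹' (G2 ∩ X ×ˢ Y) = ∅ := by
              ext x; simp [hy]
            simp [this]
      _ = μ Y * P := by rw [lintegral_indicator_const hYm, mul_comm]
  have hmain : μ X * μ Y ≤ μ X * (2 * P) := by
    calc μ X * μ Y = (μ.prod μ) (X ×ˢ Y) := (Measure.prod_prod _ _).symm
      _ ≤ _ := measure_mono hcover
      _ ≤ _ := measure_union_le _ _
      _ ≤ μ X * P + μ Y * P := add_le_add e1 e2
      _ = μ (X ∪ Y) * P := by rw [measure_union hdisj hYm, add_mul]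
      _ ≤ μ (B ∩ S) * P := by gcongr; exact union_subset hXB hYB
      _ ≤ 2 * μ X * P := by gcongr
      _ = _ := by ring
  by_cases hX0 : μ X = 0
  · have : μ (B ∩ S) = 0 := by simpa [hX0] using hhalf
    rw [measure_mono_null hYB this]
    exact zero_le
  · exact (ENNReal.mul_le_mul_iff_right hX0 (ne_top_of_le_ne_top hBfin (measure_mono hXB))).1 hmain

lemma scaling {m : ℕ} (S : Set (Euc (m+1))) (v : Euc (m+1) → ℝ) (hv : Measurable v)
    (α : ℝ) (hhom : ∀ x ∈ S, ∀ t : ℝ, 0 < t → v (t • x) = t ^ α * v x)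
    (Y : Set (Euc (m+1))) (hY : MeasurableSet Y) (hYS : Y ⊆ S)
    (μ : Measure (Euc (m+1))) (hμ : μ = volume.withDensity (fun x => ENNReal.ofReal (v x))) :
    μ ((fun y => (1/4 : ℝ) • y) ⁻¹' Y) ≤ ENNReal.ofReal (4 ^ (m+1) * 4 ^ α) * μ Y := by
  set F : Euc (m+1) → ℝ≥0∞ := Y.indicator (fun x => ENNReal.ofReal (v ((4:ℝ) • x))) with hF
  have hFm : Measurable F := (hv.comp (measurable_const_smul (4:ℝ))).ennreal_ofReal.indicator hY
  have hpre : MeasurableSet ((fun y : Euc (m+1) => (1/4 : ℝ) • y) ⁻¹' Y) :=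
    (measurable_const_smul (1/4 : ℝ)) hY
  have h1 : μ ((fun y => (1/4 : ℝ) • y) ⁻¹' Y) = ∫⁻ y, F ((1/4 : ℝ) • y) := by
    rw [hμ, withDensity_apply _ hpre, ← lintegral_indicator hpre]
    refine lintegral_congr fun y => ?_
    by_cases hy : (1/4 : ℝ) • y ∈ Y
    · rw [hF, indicator_of_mem hy, indicator_of_mem (show y ∈ _ from hy), smul_smul]
      norm_num
    · rw [hF, indicator_of_notMem hy, indicator_of_notMem (show y ∉ _ from hy)]
  rw [h1, ← lintegral_map hFm (measurable_const_smul (1/4 : ℝ)),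
    Measure.map_addHaar_smul _ (by norm_num), lintegral_smul_measure, hF, lintegral_indicator hY,
    hμ, withDensity_apply _ hY, smul_eq_mul]
  rw [ENNReal.ofReal_mul (by positivity), mul_assoc]
  refine mul_le_mul' (ENNReal.ofReal_le_ofReal ?_) ?_
  · rw [abs_of_pos (by positivity)]
    simp
  · rw [← lintegral_const_mul _ hv.ennreal_ofReal]
    refine (setLIntegral_congr_fun hY fun x hx => ?_).le
    rw [hhom x (hYS hx) 4 (by norm_num), ENNReal.ofReal_mul (by positivity)]

lemma main_aux {m : ℕ} (α : ℝ) (hα : 0 < α) :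
    ∃ ε₀ C : ℝ, 0 < ε₀ ∧ 0 < C ∧
      ∀ S : Set (Euc (m+1)), IsOpenConvexCone S →
      ∀ w : Euc (m+1) → ℝ, IsAdmissibleWeight S α w →
        wVol w (ball (0 : Euc (m+1)) 1 ∩ S) = 1 →
      ∀ E : Set (Euc (m+1)), E ⊆ S → IsOpen E → Bornology.IsBounded E → HasSmoothBoundary E →
        wVol w (ball (0 : Euc (m+1)) (1 / 2) ∩ S) ≤ 2 * wVol w (E ∩ ball (0 : Euc (m+1)) (1 / 2)) →
      ∀ x₀ : Euc (m+1), ‖x₀‖ ≤ ε₀ →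
        wVol w (symmDiff E (ball x₀ 1 ∩ S)) ≤
          ENNReal.ofReal
            (C * ∫ x in frontier E ∩ S, |‖x - x₀‖ - 1| * w x ∂(μH[((m+1 : ℕ) : ℝ) - 1])) := by
  set K1 : ℝ≥0∞ := 2 * (4 * (tubeC m * ENNReal.ofReal 1 * ENNReal.ofReal (2 ^ α)) * 4) with hK1
  set K2 : ℝ≥0∞ := 4 * (tubeC m * ENNReal.ofReal 2 * ENNReal.ofReal (4 ^ α)) with hK2
  set K3 : ℝ≥0∞ := 4 * (tubeC m * ENNReal.ofReal 3 * ENNReal.ofReal 1) with hK3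
  set K : ℝ≥0∞ := K3 + (ENNReal.ofReal (4 ^ (m+1) * 4 ^ α) * K1 + K2) with hK
  have hKtop : K ≠ ∞ := by
    have := tubeC_ne_top m
    rw [hK, hK1, hK2, hK3]
    finiteness
  refine ⟨1 / 8, K.toReal + 1, by norm_num, by positivity, ?_⟩
  intro S hS w hw hnorm E hES hEo hEb hsm hhalf x₀ hx₀
  obtain ⟨hSo, hSc, hScone⟩ := hS
  obtain ⟨hwc, hwnn, -, hwhom, hwconc⟩ := hw
  obtain ⟨f, hfs, hEf, hfr, hfd⟩ := hsm
  have hfc : Continuous f := hfs.continuous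
  have hcast : (((m+1 : ℕ) : ℝ) - 1) = (m : ℝ) := by push_cast; ring
  rw [hcast]
  have hcl : S ⊆ closure S := subset_closure
  -- the truncated weight
  classical
  set v : Euc (m+1) → ℝ := S.indicator w with hvdef
  have hvS : ∀ x ∈ S, v x = w x := fun x hx => indicator_of_mem hx w
  have hv : Measurable v := by
    have := ContinuousOn.measurable_piecewise (s := S) (f := w) (g := fun _ => (0:ℝ))
      (hwc.mono hcl) continuousOn_const hSo.measurableSet
    convert this using 1
    exact (Set.piecewise_eq_indicator (s := S) (f := w)).symm
  have hv0 : ∀ x, 0 ≤ v x := by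
    intro x
    by_cases hx : x ∈ S
    · rw [hvS x hx]; exact hwnn x (hcl hx)
    · rw [hvdef, indicator_of_notMem hx]
  have hhom : ∀ x ∈ S, ∀ t : ℝ, 0 < t → v (t • x) = t ^ α * v x := by
    intro x hx t ht
    rw [hvS x hx, hvS _ (hScone x hx t ht), hwhom x (hcl hx) t ht]
  have hconc : ∀ x ∈ S, ∀ y ∈ S, ∀ t : ℝ, 1 / 2 ≤ t → t ≤ 1 →
      v y ≤ 2 ^ α * v (x + t • (y - x)) := by
    intro x hx y hy t ht ht1
    have hz : x + t • (y - x) ∈ S := hSc.add_smul_sub_mem hx hy ⟨by linarith, ht1⟩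
    have h1 := hwconc.2 hx hy (show 0 ≤ 1 - t by linarith) (show 0 ≤ t by linarith) (by ring)
    have e : (1 - t) • x + t • y = x + t • (y - x) := by module
    rw [e] at h1
    rw [hvS y hy, hvS _ hz]
    set Wx := w x ^ (1 / α)
    have hWx : 0 ≤ Wx := Real.rpow_nonneg (hwnn x (hcl hx)) _
    have hwy := hwnn y (hcl hy)
    have hwz := hwnn _ (hcl hz)
    have hWy : 0 ≤ w y ^ (1 / α) := Real.rpow_nonneg hwy _
    simp only [smul_eq_mul] at h1
    have h2 : w y ^ (1 / α) ≤ 2 * w (x + t • (y - x)) ^ (1 / α) := by nlinarith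
    have h3 := Real.rpow_le_rpow hWy h2 hα.le
    rw [Real.mul_rpow (by norm_num) (Real.rpow_nonneg hwz _), ← Real.rpow_mul hwy,
      ← Real.rpow_mul hwz, one_div_mul_cancel hα.ne', Real.rpow_one, Real.rpow_one] at h3
    exact h3
  set μ : Measure (Euc (m+1)) := volume.withDensity (fun x => ENNReal.ofReal (v x)) with hμ
  have hwv : ∀ A : Set (Euc (m+1)), MeasurableSet A → A ⊆ S → wVol w A = μ A := by
    intro A hA hAS
    rw [wVol, hμ, withDensity_apply _ hA]
    exact setLIntegral_congr_fun hA fun x hx => by rw [hvS x (hAS hx)]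
  -- the boundary
  set Z := {x | f x = 0} with hZ
  have hZc : IsCompact Z := by
    rw [← hfr]
    exact Metric.isCompact_of_isClosed_isBounded isClosed_frontier
      (hEb.closure.subset frontier_subset_closure)
  have hZfin : μH[(m:ℝ)] Z ≠ ∞ :=
    hausdorff_levelset_finite f hfs Z hZc (fun x hx => hx) (fun x hx => hfd x (hfr ▸ hx))
  set g : Euc (m+1) → ℝ := fun z => |‖z - x₀‖ - 1| with hg
  have hgc : Continuous g := by fun_prop
  set A := Z ∩ S with hA
  have hAm : MeasurableSet A := hZc.isClosed.measurableSet.inter hSo.measurableSet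
  have hAfin : μH[(m:ℝ)] A ≠ ∞ := ne_top_of_le_ne_top hZfin (measure_mono inter_subset_left)
  obtain ⟨M, hM⟩ : ∃ M, ∀ x ∈ A, g x ≤ M := by
    obtain ⟨M, hM⟩ := hZc.bddAbove_image hgc.continuousOn
    exact ⟨M, fun x hx => hM ⟨x, hx.1, rfl⟩⟩
  set I := ∫⁻ x in A, ENNReal.ofReal (g x * v x) ∂μH[(m:ℝ)] with hI
  -- conversion of the right-hand side
  have hRHS : ENNReal.ofReal (∫ x in frontier E ∩ S, |‖x - x₀‖ - 1| * w x ∂μH[(m:ℝ)]) = I := by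
    rw [hfr]
    have hcongr : ∫ x in A, |‖x - x₀‖ - 1| * w x ∂μH[(m:ℝ)] = ∫ x in A, g x * v x ∂μH[(m:ℝ)] :=
      setIntegral_congr_fun hAm fun x hx => by simp only [hg]; rw [hvS x hx.2]
    rw [hcongr, ofReal_integral_eq_lintegral_ofReal]
    · have hZS : Z ⊆ closure S := by
        rw [← hfr]; exact frontier_subset_closure.trans (closure_mono hES)
      obtain ⟨M', hM'⟩ := hZc.bddAbove_image (hwc.mono hZS)
      refine Measure.integrableOn_of_bounded (M := M * M') hAfin
        (hgc.measurable.mul hv).aestronglyMeasurable ?_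
      rw [ae_restrict_iff' hAm]
      refine Filter.Eventually.of_forall fun x hx => ?_
      have hg0 : 0 ≤ g x := abs_nonneg _
      rw [Real.norm_of_nonneg (mul_nonneg hg0 (hv0 x))]
      have h1 : v x ≤ M' := by rw [hvS x hx.2]; exact hM' ⟨x, hx.1, rfl⟩
      exact mul_le_mul (hM x hx) h1 (hv0 x) (hg0.trans (hM x hx))
    · exact Filter.Eventually.of_forall fun x => mul_nonneg (abs_nonneg _) (hv0 x)
  -- ball of radius 1/2
  have hBm : MeasurableSet (ball (0 : Euc (m+1)) (1/2) ∩ S) := (isOpen_ball.inter hSo).measurableSet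
  have hBfin : μ (ball (0 : Euc (m+1)) (1/2) ∩ S) ≠ ∞ := by
    refine ne_top_of_le_ne_top ENNReal.one_ne_top ?_
    rw [← hnorm, hwv _ (isOpen_ball.inter hSo).measurableSet inter_subset_right]
    exact measure_mono (inter_subset_inter_left _ (ball_subset_ball (by norm_num)))
  rw [hwv _ hBm inter_subset_right, hwv _ (hEo.inter isOpen_ball).measurableSet
    (inter_subset_left.trans hES), hEf] at hhalf
  have hP := poincare S hSo hSc v hv hv0 (2 ^ α) (by positivity) hconc f hfc (hEf ▸ hES) hZfin μ hμ
    hBfin hhalf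
  rw [← hEf] at hP
  set Y := (S \ E) ∩ ball (0 : Euc (m+1)) (1/2) with hY
  have hYm : MeasurableSet Y := (hSo.measurableSet.diff hEo.measurableSet).inter measurableSet_ball
  have hP' : μ Y ≤ K1 * I := by
    refine hP.trans ?_
    rw [hK1, mul_assoc (2 : ℝ≥0∞), mul_assoc (4 * _) 4 I]
    refine mul_le_mul_right (mul_le_mul_right ?_ _) _
    have hgm : Measurable (fun x => ENNReal.ofReal (g x * v x)) :=
      (hgc.measurable.mul hv).ennreal_ofReal
    rw [hI, ← lintegral_const_mul _ hgm]
    have hsub : Z ∩ (ball (0 : Euc (m+1)) (1/2) ∩ S) ⊆ A := fun x hx => ⟨hx.1, hx.2.2⟩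
    refine le_trans ?_ (lintegral_mono_set hsub)
    refine setLIntegral_mono' (hZc.isClosed.measurableSet.inter hBm) fun x hx => ?_
    have : (4 : ℝ≥0∞) = ENNReal.ofReal 4 := by simp
    rw [this, ← ENNReal.ofReal_mul (by norm_num)]
    refine ENNReal.ofReal_le_ofReal ?_
    have h1 : ‖x‖ < 1 / 2 := mem_ball_zero_iff.1 hx.2.1
    have h2 : 1 / 4 ≤ g x := by
      have := norm_sub_le x x₀
      rw [hg]
      refine le_trans ?_ (neg_le_abs _)
      linarith
    nlinarith [hv0 x]
  -- inner estimate
  have hin : μ ((ball x₀ 1 ∩ S) \ E) ≤ (ENNReal.ofReal (4 ^ (m+1) * 4 ^ α) * K1 + K2) * I := by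
    have hm := master v g hv hgc.measurable A hAm hAfin (fun x _ => hv0 x) (fun _ _ => abs_nonneg _)
      M hM 0 2 (4 ^ α) (by norm_num) (by positivity)
      (fun y z => y ∈ ball x₀ 1 ∩ S ∧ ∃ t ∈ Icc (1/4 : ℝ) 1, z = t • y) ?_
    · have hcov : (ball x₀ 1 ∩ S) \ E ⊆ ((fun y => (1/4 : ℝ) • y) ⁻¹' Y) ∪
          {y | ∃ z ∈ A, y ∈ ball x₀ 1 ∩ S ∧ ∃ t ∈ Icc (1/4 : ℝ) 1, z = t • y} := by
        rintro y ⟨⟨hyB, hyS⟩, hyE⟩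
        by_cases h : (1/4 : ℝ) • y ∈ E
        · right
          have h1 : f ((1/4 : ℝ) • y) < 0 := by rw [hEf] at h; exact h
          have h2 : 0 ≤ f y := by rw [hEf] at hyE; exact not_lt.1 hyE
          obtain ⟨t, ht, h0⟩ := seg_zero f hfc 0 y (1/4) 1 (by norm_num)
            (Or.inl ⟨by simpa using h1.le, by simpa using h2⟩)
          rw [zero_add] at h0
          exact ⟨t • y, ⟨h0, hScone y hyS t (by linarith [ht.1])⟩, ⟨hyB, hyS⟩, t, ht, rfl⟩
        · left
          refine ⟨⟨hScone y hyS _ (by norm_num), h⟩, ?_⟩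
          rw [mem_ball_zero_iff, norm_smul]
          rw [mem_ball, dist_eq_norm] at hyB
          have := norm_le_norm_sub_add y x₀
          norm_num
          linarith
      rw [add_mul]
      refine (measure_mono hcov).trans ((measure_union_le _ _).trans (add_le_add ?_ hm))
      refine (scaling S v hv α hhom Y hYm (fun x hx => hx.1.1) μ hμ).trans ?_
      rw [mul_assoc]
      exact mul_le_mul_right hP' _
    · rintro y z hz ⟨⟨hyB, hyS⟩, t, ht, rfl⟩
      have ht0 : 0 < t := by linarith [ht.1]
      rw [mem_ball, dist_eq_norm] at hyB
      have hy2 := norm_le_norm_sub_add y x₀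
      refine ⟨t⁻¹, by positivity, ?_, ?_, ?_, ?_⟩
      · rw [inv_le_comm₀ ht0 (by norm_num)]; linarith [ht.1]
      · rw [sub_zero, zero_add, smul_smul, inv_mul_cancel₀ ht0.ne', one_smul]
      · have e1 : y - t • y = (1 - t) • y := by module
        rw [e1, norm_smul, Real.norm_of_nonneg (by linarith [ht.2])]
        have e2 : t • y - x₀ = t • (y - x₀) - (1 - t) • x₀ := by module
        have e3 : ‖t • y - x₀‖ ≤ t * ‖y - x₀‖ + (1 - t) * ‖x₀‖ := by
          rw [e2]
          refine (norm_sub_le _ _).trans (le_of_eq ?_)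
          rw [norm_smul, norm_smul, Real.norm_of_nonneg ht0.le,
            Real.norm_of_nonneg (by linarith [ht.2])]
        have e4 : 1 - ‖t • y - x₀‖ ≤ g (t • y) := by
          rw [hg]; refine le_trans (le_of_eq ?_) (neg_le_abs _); ring
        have e5 : (1 - t) * ‖x₀‖ ≤ (1 - t) * (1/8) :=
          mul_le_mul_of_nonneg_left hx₀ (by linarith [ht.2])
        have e6 : (1 - t) * ‖y‖ ≤ (1 - t) * (9/8) :=
          mul_le_mul_of_nonneg_left (by linarith) (by linarith [ht.2])
        have e7 : t * ‖y - x₀‖ ≤ t * 1 := mul_le_mul_of_nonneg_left hyB.le ht0.le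
        linarith [ht.2]
      · have : v y = (t⁻¹) ^ α * v (t • y) := by
          rw [← hhom _ hz.2 _ (by positivity), smul_smul, inv_mul_cancel₀ ht0.ne', one_smul]
        rw [this]
        refine mul_le_mul_of_nonneg_right ?_ (hv0 _)
        refine Real.rpow_le_rpow (by positivity) ?_ hα.le
        rw [inv_le_comm₀ ht0 (by norm_num)]; linarith [ht.1]
  -- outer estimate
  have hout : μ (E \ (ball x₀ 1 ∩ S)) ≤ K3 * I := by
    have hm := master v g hv hgc.measurable A hAm hAfin (fun x _ => hv0 x) (fun _ _ => abs_nonneg _)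
      M hM 0 3 1 (by norm_num) one_pos
      (fun y z => 1 ≤ ‖y - x₀‖ ∧ y ∈ S ∧ ∃ s : ℝ, 0 < s ∧ s ≤ 1 ∧ y = s • z) ?_
    · refine (measure_mono ?_).trans hm
      rintro y ⟨hyE, hyn⟩
      have hyS := hES hyE
      have hy1 : 1 ≤ ‖y - x₀‖ := by
        by_contra h
        exact hyn ⟨by rw [mem_ball, dist_eq_norm]; exact not_le.1 h, hyS⟩
      have hy0 : 0 < ‖y‖ := by
        have := norm_sub_le y x₀
        linarith
      obtain ⟨R, hR⟩ := hEb.exists_norm_le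
      set Λ := max 1 ((R + 1) / ‖y‖) with hΛ
      have hΛy : Λ • y ∉ E := by
        intro h
        have h1 := hR _ h
        rw [norm_smul, Real.norm_of_nonneg (zero_le_one.trans (le_max_left _ _))] at h1
        have h2 : (R + 1) / ‖y‖ ≤ Λ := le_max_right _ _
        rw [div_le_iff₀ hy0] at h2
        linarith
      have h1 : f y < 0 := by rw [hEf] at hyE; exact hyE
      have h2 : 0 ≤ f (Λ • y) := by rw [hEf] at hΛy; exact not_lt.1 hΛy
      obtain ⟨t, ht, h0⟩ := seg_zero f hfc 0 y 1 Λ (le_max_left _ _)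
            (Or.inl ⟨by simpa using h1.le, by simpa using h2⟩)
      rw [zero_add] at h0
      have ht0 : 0 < t := by linarith [ht.1]
      exact ⟨t • y, ⟨h0, hScone y hyS t ht0⟩, hy1, hyS, t⁻¹, by positivity,
        inv_le_one_of_one_le₀ ht.1, by rw [smul_smul, inv_mul_cancel₀ ht0.ne', one_smul]⟩
    · rintro y z hz ⟨hy1, hyS, s, hs0, hs1, rfl⟩
      refine ⟨s, hs0.le, by linarith, by simp, ?_, ?_⟩
      · have e1 : s • z - z = -((1 - s) • z) := by module
        rw [e1, norm_neg, norm_smul, Real.norm_of_nonneg (by linarith)]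
        have e2 : s • z - x₀ = s • (z - x₀) - (1 - s) • x₀ := by module
        have e3 : ‖s • z - x₀‖ ≤ s * ‖z - x₀‖ + (1 - s) * ‖x₀‖ := by
          rw [e2]
          refine (norm_sub_le _ _).trans (le_of_eq ?_)
          rw [norm_smul, norm_smul, Real.norm_of_nonneg hs0.le, Real.norm_of_nonneg (by linarith)]
        have e4 : ‖z - x₀‖ - 1 ≤ g z := le_abs_self _
        have e5 : (1 - s) * ‖x₀‖ ≤ (1 - s) * (1/8) :=
          mul_le_mul_of_nonneg_left hx₀ (by linarith)
        have e6 : s * ‖z - x₀‖ ≤ s * (1 + g z) := mul_le_mul_of_nonneg_left (by linarith) hs0.le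
        have e7 := norm_le_norm_sub_add z x₀
        have hg0 : 0 ≤ g z := abs_nonneg _
        have e8 : (1 - s) * (7/8) ≤ s * g z := by linarith
        have e9 : s * g z ≤ g z := by nlinarith
        have e10 : ‖z‖ ≤ 9/8 + g z := by linarith
        have e11 : (1 - s) * ‖z‖ ≤ (1 - s) * (9/8 + g z) :=
          mul_le_mul_of_nonneg_left e10 (by linarith)
        nlinarith
      · rw [hhom z hz.2 s hs0]
        refine mul_le_mul_of_nonneg_right ?_ (hv0 _)
        exact Real.rpow_le_one hs0.le hs1 hα.le
  -- conclusion
  have hsd : MeasurableSet (symmDiff E (ball x₀ 1 ∩ S)) :=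
    hEo.measurableSet.symmDiff (isOpen_ball.inter hSo).measurableSet
  rw [hwv _ hsd (by
    rintro x (hx | hx)
    · exact hES hx.1
    · exact hx.1.2), ENNReal.ofReal_mul (by positivity), hRHS]
  calc μ (symmDiff E (ball x₀ 1 ∩ S)) ≤ μ (E \ (ball x₀ 1 ∩ S)) + μ ((ball x₀ 1 ∩ S) \ E) :=
        measure_union_le _ _
    _ ≤ K * I := by rw [hK, add_mul K3]; exact add_le_add hout hin
    _ ≤ _ := by
      gcongr
      calc K = ENNReal.ofReal K.toReal := (ENNReal.ofReal_toReal hKtop).symm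
        _ ≤ _ := ENNReal.ofReal_le_ofReal (by linarith)

/-- "Spherical boundary implies ball": if `E` fills half of `B_{1/2} ∩ Σ`, then the
symmetric difference with a slightly translated unit ball is controlled by how far
`∂E ∩ Σ` is from the unit sphere centered at `x₀`. The constants depend only on `n, α`. -/
theorem stmt_16 {n : ℕ} (hn : 1 ≤ n) (α : ℝ) (hα : 0 < α) :
    ∃ ε₀ C : ℝ, 0 < ε₀ ∧ 0 < C ∧
      ∀ S : Set (Euc n), IsOpenConvexCone S →
      ∀ w : Euc n → ℝ, IsAdmissibleWeight S α w →
        wVol w (ball (0 : Euc n) 1 ∩ S) = 1 →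
      ∀ E : Set (Euc n), E ⊆ S → IsOpen E → Bornology.IsBounded E → HasSmoothBoundary E →
        wVol w (ball (0 : Euc n) (1 / 2) ∩ S) ≤ 2 * wVol w (E ∩ ball (0 : Euc n) (1 / 2)) →
      ∀ x₀ : Euc n, ‖x₀‖ ≤ ε₀ →
        wVol w (symmDiff E (ball x₀ 1 ∩ S)) ≤
          ENNReal.ofReal
            (C * ∫ x in frontier E ∩ S, |‖x - x₀‖ - 1| * w x ∂(μH[(n : ℝ) - 1])) := by
  obtain ⟨m, rfl⟩ : ∃ m, n = m + 1 := ⟨n - 1, by omega⟩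
  exact main_aux α hα
end
end

section
/- There is a constant C > 0, depending only on n and α, such that for every open set F ⊆ B₁ ∩ Σ with smooth boundary and w(F) ≤ (1/2) w(B₁ ∩ Σ) one has w(F) ≤ C ∫_{∂F ∩ B₁ ∩ Σ} w dH^{n−1}. -/
open MeasureTheory Metric Set
open scoped RealInnerProductSpace ENNReal NNReal Topology

noncomputable section

/-- The set swept out by the segments from `z ∈ T` to `x + 2 (z - x)`. -/
def sweep {n : ℕ} (x : Euc n) (T : Set (Euc n)) : Set (Euc n) :=
  {y | ∃ z ∈ T, ∃ s ∈ Icc (1 : ℝ) 2, y = x + s • (z - x)}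

def cst (m : ℕ) : ℝ := 3 * 4 ^ (m + 1) * (volume (closedBall (0 : Euc (m + 1)) 1)).toReal

lemma cst_nonneg (m : ℕ) : 0 ≤ cst m := by unfold cst; positivity

lemma vol_piece (m : ℕ) (x : Euc (m + 1)) (T : Set (Euc (m + 1)))
    (hx : x ∈ ball (0 : Euc (m + 1)) 1) (hT : T ⊆ ball (0 : Euc (m + 1)) 1)
    (δ : ℝ) (h0 : 0 < δ) (h2 : δ ≤ 2) (hd : ∀ a ∈ T, ∀ b ∈ T, dist a b ≤ δ) :
    volume (sweep x T) ≤ ENNReal.ofReal (cst m * δ ^ m) := by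
  rcases T.eq_empty_or_nonempty with rfl | ⟨a, ha⟩
  · simp [sweep]
  have hsub : sweep x T ⊆ ⋃ j ∈ Finset.range (⌊1 / δ⌋₊ + 1),
      closedBall (x + (1 + (j : ℝ) * δ) • (a - x)) (4 * δ) := by
    rintro y ⟨z, hz, s, ⟨hs1, hs2⟩, rfl⟩
    have hnn : 0 ≤ (s - 1) / δ := div_nonneg (by linarith) h0.le
    simp only [mem_iUnion, Finset.mem_range]
    refine ⟨⌊(s - 1) / δ⌋₊, ?_, ?_⟩
    · apply Nat.lt_succ_of_le
      apply Nat.floor_le_floor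
      gcongr
      linarith
    · have e1 := Nat.floor_le hnn
      have e2 := Nat.lt_floor_add_one ((s - 1) / δ)
      rw [le_div_iff₀ h0] at e1
      rw [div_lt_iff₀ h0] at e2
      set j : ℝ := (⌊(s - 1) / δ⌋₊ : ℝ)
      have hj : 0 ≤ j := Nat.cast_nonneg _
      have hjd : 0 ≤ j * δ := by positivity
      rw [mem_closedBall, dist_eq_norm]
      have : x + s • (z - x) - (x + (1 + j * δ) • (a - x))
          = (s - (1 + j * δ)) • (z - x) + (1 + j * δ) • (z - a) := by module
      rw [this]
      have hza : ‖z - a‖ ≤ δ := by rw [← dist_eq_norm]; exact hd z hz a ha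
      have hzx : ‖z - x‖ ≤ 2 := by
        have h1 := hT hz
        rw [mem_ball_zero_iff] at h1 hx
        have := norm_sub_le z x
        linarith
      calc _ ≤ ‖(s - (1 + j * δ)) • (z - x)‖ + ‖(1 + j * δ) • (z - a)‖ := norm_add_le _ _
        _ ≤ δ * 2 + 2 * δ := by
          rw [norm_smul, norm_smul, Real.norm_of_nonneg (by linarith),
            Real.norm_of_nonneg (by linarith)]
          apply add_le_add
          · apply mul_le_mul _ hzx (norm_nonneg _) h0.le
            linarith
          · apply mul_le_mul _ hza (norm_nonneg _) (by norm_num)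
            linarith
        _ = 4 * δ := by ring
  have hfin : volume (closedBall (0 : Euc (m + 1)) 1) ≠ ⊤ := measure_closedBall_lt_top.ne
  calc volume (sweep x T) ≤ _ := measure_mono hsub
    _ ≤ ∑ j ∈ Finset.range (⌊1 / δ⌋₊ + 1),
        volume (closedBall (x + (1 + (j : ℝ) * δ) • (a - x)) (4 * δ)) :=
      measure_biUnion_finset_le _ _
    _ = ∑ j ∈ Finset.range (⌊1 / δ⌋₊ + 1), ENNReal.ofReal ((4 * δ) ^ (m + 1)
          * (volume (closedBall (0 : Euc (m + 1)) 1)).toReal) := by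
      refine Finset.sum_congr rfl fun j _ => ?_
      rw [Measure.addHaar_closedBall' _ _ (by positivity : (0 : ℝ) ≤ 4 * δ),
        ENNReal.ofReal_mul (by positivity), ENNReal.ofReal_toReal hfin]
      simp
    _ = ENNReal.ofReal (((⌊1 / δ⌋₊ + 1 : ℕ) : ℝ) * ((4 * δ) ^ (m + 1)
          * (volume (closedBall (0 : Euc (m + 1)) 1)).toReal)) := by
      rw [ENNReal.ofReal_mul (Nat.cast_nonneg _), ENNReal.ofReal_natCast, Finset.sum_const,
        Finset.card_range, nsmul_eq_mul]
    _ ≤ _ := by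
      apply ENNReal.ofReal_le_ofReal
      have hfl : ((⌊1 / δ⌋₊ + 1 : ℕ) : ℝ) ≤ 3 / δ := by
        have := Nat.floor_le (by positivity : 0 ≤ 1 / δ)
        push_cast
        have h3 : 1 ≤ 2 / δ := by rw [le_div_iff₀ h0]; linarith
        have h4 : 3 / δ = 1 / δ + 2 / δ := by ring
        linarith
      calc _ ≤ 3 / δ * ((4 * δ) ^ (m + 1)
          * (volume (closedBall (0 : Euc (m + 1)) 1)).toReal) := by gcongr
        _ = _ := by unfold cst; rw [mul_pow, pow_succ δ m]; field_simp

lemma vol_sweep (m : ℕ) (x : Euc (m + 1)) (T : Set (Euc (m + 1)))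
    (hx : x ∈ ball (0 : Euc (m + 1)) 1) (hT : T ⊆ ball (0 : Euc (m + 1)) 1) :
    volume (sweep x T) ≤ ENNReal.ofReal (cst m) * μH[(m : ℝ)] T := by
  by_cases hc0 : cst m = 0
  · have : cst m ≠ 0 := by
      unfold cst
      have h1 : 0 < volume (closedBall (0 : Euc (m + 1)) 1) :=
        measure_closedBall_pos _ _ one_pos
      have := ENNReal.toReal_pos h1.ne' measure_closedBall_lt_top.ne
      positivity
    exact absurd hc0 this
  have hcpos : 0 < cst m := lt_of_le_of_ne (cst_nonneg m) (Ne.symm hc0)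
  have hE : ENNReal.ofReal (cst m) ≠ 0 := by simpa using hcpos
  rw [← ENNReal.div_le_iff' hE ENNReal.ofReal_ne_top,
    Measure.hausdorffMeasure_apply]
  refine le_iSup₂_of_le (1 : ℝ≥0∞) one_pos ?_
  refine le_iInf₂ fun t ht => le_iInf fun hdiam => ?_
  rw [ENNReal.div_le_iff' hE ENNReal.ofReal_ne_top, ← ENNReal.tsum_mul_left]
  have hsub : sweep x T ⊆ ⋃ i, sweep x (T ∩ t i) := by
    rintro y ⟨z, hz, s, hs, rfl⟩
    obtain ⟨i, hi⟩ := mem_iUnion.1 (ht hz)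
    exact mem_iUnion.2 ⟨i, z, ⟨hz, hi⟩, s, hs, rfl⟩
  refine (measure_mono hsub).trans ((measure_iUnion_le _).trans (ENNReal.tsum_le_tsum fun i => ?_))
  rcases (t i).eq_empty_or_nonempty with he | hne
  · simp [he, sweep]
  rw [iSup_pos hne]
  have hfin : ediam (t i) ≠ ⊤ := ((hdiam i).trans_lt ENNReal.one_lt_top).ne
  set d : ℝ := (ediam (t i)).toReal with hd
  have hd0 : 0 ≤ d := ENNReal.toReal_nonneg
  have hd1 : d ≤ 1 := by
    have := ENNReal.toReal_mono ENNReal.one_ne_top (hdiam i)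
    simpa using this
  have hde : ediam (t i) = ENNReal.ofReal d := (ENNReal.ofReal_toReal hfin).symm
  rw [hde, ENNReal.rpow_natCast, ← ENNReal.ofReal_pow hd0, ← ENNReal.ofReal_mul (cst_nonneg m)]
  have hlim : Filter.Tendsto (fun ε : ℝ => ENNReal.ofReal (cst m * (d + ε) ^ m)) (𝓝[>] 0)
      (𝓝 (ENNReal.ofReal (cst m * d ^ m))) := by
    have hc : Continuous (fun ε : ℝ => ENNReal.ofReal (cst m * (d + ε) ^ m)) :=
      ENNReal.continuous_ofReal.comp (by fun_prop)
    have := (hc.tendsto 0).mono_left (nhdsWithin_le_nhds (s := Ioi 0))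
    simpa using this
  refine ge_of_tendsto hlim ?_
  filter_upwards [Ioc_mem_nhdsGT (zero_lt_one' ℝ)] with ε hε
  refine vol_piece m x _ hx (inter_subset_left.trans hT) (d + ε) (by linarith [hε.1])
    (by linarith [hε.2]) fun a ha b hb => ?_
  have h1 : edist a b ≤ ENNReal.ofReal d := hde ▸ edist_le_ediam_of_mem ha.2 hb.2
  rw [edist_dist, ENNReal.ofReal_le_ofReal_iff hd0] at h1
  linarith [hε.1]

lemma weighted_sweep (m : ℕ) (x : Euc (m + 1)) (M A : Set (Euc (m + 1)))
    (hx : x ∈ ball (0 : Euc (m + 1)) 1) (hM : M ⊆ ball (0 : Euc (m + 1)) 1)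
    (w : Euc (m + 1) → ℝ) (hw : Measurable w) (hw0 : ∀ y, 0 ≤ w y) (c : ℝ) (hc : 0 ≤ c)
    (h : ∀ y ∈ A, ∃ z ∈ M, w y ≤ c * w z ∧ ∃ s ∈ Icc (1 : ℝ) 2, y = x + s • (z - x)) :
    ∫⁻ y in A, ENNReal.ofReal (w y) ≤
      ENNReal.ofReal (cst m * c) * ∫⁻ z in M, ENNReal.ofReal (w z) ∂μH[(m : ℝ)] := by
  have h1 : ∫⁻ z in M, ENNReal.ofReal (c * w z) ∂μH[(m : ℝ)] =
      ENNReal.ofReal c * ∫⁻ z in M, ENNReal.ofReal (w z) ∂μH[(m : ℝ)] := by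
    rw [← lintegral_const_mul _ hw.ennreal_ofReal]
    simp_rw [ENNReal.ofReal_mul hc]
  rw [ENNReal.ofReal_mul (cst_nonneg m), mul_assoc, ← h1,
    lintegral_eq_lintegral_meas_lt _ (Filter.Eventually.of_forall hw0) hw.aemeasurable,
    lintegral_eq_lintegral_meas_lt _
      (Filter.Eventually.of_forall fun z => mul_nonneg hc (hw0 z)) (hw.const_mul c).aemeasurable]
  rw [← lintegral_const_mul' _ _ ENNReal.ofReal_ne_top]
  refine lintegral_mono fun t => ?_
  rw [Measure.restrict_apply (measurableSet_lt measurable_const hw),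
    Measure.restrict_apply (measurableSet_lt measurable_const (hw.const_mul c))]
  refine le_trans (measure_mono ?_) (vol_sweep m x _ hx (inter_subset_right.trans hM))
  rintro y ⟨hy, hyA⟩
  obtain ⟨z, hz, hyz, s, hs, e⟩ := h y hyA
  exact ⟨z, ⟨lt_of_lt_of_le hy hyz, hz⟩, s, hs, e⟩

lemma local_finite (m : ℕ) (f : Euc (m + 1) → ℝ) (hf : ContDiff ℝ (⊤ : ℕ∞) f) (p : Euc (m + 1))
    (hp : fderiv ℝ f p ≠ 0) :
    ∃ U ∈ 𝓝 p, μH[(m : ℝ)] ({x | f x = 0} ∩ U) < ⊤ := by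
  set l : Euc (m + 1) →L[ℝ] ℝ := fderiv ℝ f p with hl
  obtain ⟨e, he⟩ : ∃ e, l e = 1 := by
    obtain ⟨v, hv⟩ : ∃ v, l v ≠ 0 := by
      by_contra! hcon
      exact hp (ContinuousLinearMap.ext hcon)
    exact ⟨(l v)⁻¹ • v, by simp [hv]⟩
  have he0 : 0 < ‖e‖ := by
    rw [norm_pos_iff]; rintro rfl; simp at he
  have hs : HasStrictFDerivAt f l p :=
    hf.contDiffAt.hasStrictFDerivAt (by simp)
  have hlo := (hasStrictFDerivAt_iff_isLittleO.1 hs).def (c := 1 / (2 * ‖e‖)) (by positivity)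
  obtain ⟨V, hV, hVs⟩ : ∃ V ∈ 𝓝 p, ∀ a ∈ V, ∀ b ∈ V,
      ‖f a - f b - l (a - b)‖ ≤ 1 / (2 * ‖e‖) * ‖a - b‖ := by
    rw [nhds_prod_eq] at hlo
    obtain ⟨V, hV, h⟩ := Filter.eventually_prod_self_iff (r := fun a b =>
      ‖f a - f b - l (a - b)‖ ≤ 1 / (2 * ‖e‖) * ‖a - b‖) |>.1 hlo
    exact ⟨V, hV, fun a ha b hb => h a ha b hb⟩
  refine ⟨V ∩ ball p 1, Filter.inter_mem hV (ball_mem_nhds _ one_pos), ?_⟩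
  set A : Set (Euc (m + 1)) := {x | f x = 0} ∩ (V ∩ ball p 1) with hA
  let N := LinearMap.ker (l : Euc (m + 1) →ₗ[ℝ] ℝ)
  have hmem : ∀ x : Euc (m + 1), x - l x • e ∈ N := fun x => by
    simp [N, he]
  let π : Euc (m + 1) → N := fun x => ⟨x - l x • e, hmem x⟩
  let φ : A → N := fun x => π x
  have hfr : Module.finrank ℝ N = m := by
    have h1 := LinearMap.finrank_range_add_finrank_ker (l : Euc (m + 1) →ₗ[ℝ] ℝ)
    have h2 : LinearMap.range (l : Euc (m + 1) →ₗ[ℝ] ℝ) = ⊤ := by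
      rw [LinearMap.range_eq_top]
      exact fun r => ⟨r • e, by simp [he]⟩
    rw [h2] at h1
    simp at h1
    have : Module.finrank ℝ N = Module.finrank ℝ (LinearMap.ker (l : Euc (m + 1) →ₗ[ℝ] ℝ)) := rfl
    omega
  have hanti : AntilipschitzWith 2 φ := by
    refine AntilipschitzWith.of_le_mul_dist fun a b => ?_
    have h1 := hVs a a.2.2.1 b b.2.2.1
    have ha : f a = 0 := a.2.1
    have hb : f b = 0 := b.2.1
    rw [ha, hb, sub_zero, zero_sub, norm_neg] at h1
    have h2 : dist (φ a) (φ b) = ‖((a : Euc (m + 1)) - b) - l (a - b) • e‖ := by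
      rw [Subtype.dist_eq, dist_eq_norm]
      congr 1
      simp only [φ, π, map_sub]
      module
    have h3 : ‖(a : Euc (m + 1)) - b‖ ≤
        ‖((a : Euc (m + 1)) - b) - l (a - b) • e‖ + ‖l ((a : Euc (m + 1)) - b) • e‖ := by
      have := norm_add_le (((a : Euc (m + 1)) - b) - l (a - b) • e) (l ((a : Euc (m + 1)) - b) • e)
      simpa using this
    have h4 : ‖l ((a : Euc (m + 1)) - b) • e‖ ≤ 1 / 2 * ‖(a : Euc (m + 1)) - b‖ := by
      rw [norm_smul]
      calc _ ≤ (1 / (2 * ‖e‖) * ‖(a : Euc (m + 1)) - b‖) * ‖e‖ := by gcongr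
        _ = _ := by field_simp
    rw [h2, Subtype.dist_eq, dist_eq_norm]
    push_cast
    linarith
  have h5 : μH[(m : ℝ)] A = μH[(m : ℝ)] (univ : Set A) := by
    have := (isometry_subtype_coe (s := A)).hausdorffMeasure_image
      (Or.inl (Nat.cast_nonneg m : (0 : ℝ) ≤ m)) univ
    rw [← this]; simp
  rw [h5]
  refine (hanti.le_hausdorffMeasure_image (Nat.cast_nonneg m) univ).trans_lt ?_
  refine ENNReal.mul_lt_top (ENNReal.rpow_lt_top_of_nonneg (Nat.cast_nonneg m) (by simp)) ?_
  have hπc : Continuous π := by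
    refine Continuous.subtype_mk ?_ _
    fun_prop
  have hK : IsCompact (π '' closedBall p 1) := (isCompact_closedBall p 1).image hπc
  have hlt : μH[(Module.finrank ℝ N : ℝ)] (π '' closedBall p 1) < ⊤ := hK.measure_lt_top
  rw [hfr] at hlt
  refine (measure_mono ?_).trans_lt hlt
  rintro _ ⟨a, -, rfl⟩
  exact ⟨a, ball_subset_closedBall a.2.2.2, rfl⟩

lemma frontier_finite (m : ℕ) (F : Set (Euc (m + 1))) (hF : F ⊆ ball 0 1)
    (hs : HasSmoothBoundary F) : μH[(m : ℝ)] (frontier F) < ⊤ := by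
  obtain ⟨f, hf, -, hfr, hd⟩ := hs
  have hc : IsCompact (frontier F) :=
    (isCompact_closedBall (0 : Euc (m + 1)) 1).of_isClosed_subset isClosed_frontier
      (frontier_subset_closure.trans (closure_minimal (hF.trans ball_subset_closedBall)
        isClosed_closedBall))
  refine hc.induction_on (p := fun s => μH[(m : ℝ)] s < ⊤) (by simp)
    (fun s t hst ht => (measure_mono hst).trans_lt ht)
    (fun s t hs ht => (measure_union_le s t).trans_lt (ENNReal.add_lt_top.2 ⟨hs, ht⟩)) ?_
  intro p hp
  obtain ⟨U, hU, hlt⟩ := local_finite m f hf p (hd p hp)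
  refine ⟨frontier F ∩ U, inter_mem_nhdsWithin _ hU, ?_⟩
  rwa [hfr]

lemma exists_frontier_segment {n : ℕ} {F : Set (Euc n)} {a b : Euc n} (ha : a ∈ F) (hb : b ∉ F) :
    ∃ z ∈ segment ℝ a b, z ∈ frontier F := by
  by_contra! hcon
  have hpre : IsPreconnected (segment ℝ a b) := (convex_segment a b).isPreconnected
  have hsub : segment ℝ a b ⊆ interior F ∪ (closure F)ᶜ := by
    intro z hz
    by_contra h
    simp only [mem_union, mem_compl_iff, not_or, not_not] at h
    exact hcon z hz ⟨h.2, h.1⟩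
  have hai : a ∈ interior F := by
    rcases hsub (left_mem_segment ℝ a b) with h | h
    · exact h
    · exact absurd (subset_closure ha) h
  have hbi : b ∈ (closure F)ᶜ := by
    rcases hsub (right_mem_segment ℝ a b) with h | h
    · exact absurd (interior_subset h) hb
    · exact h
  obtain ⟨z, -, hz1, hz2⟩ := hpre _ _ isOpen_interior isClosed_closure.isOpen_compl hsub
    ⟨a, left_mem_segment ℝ a b, hai⟩ ⟨b, right_mem_segment ℝ a b, hbi⟩
  exact hz2 (interior_subset_closure hz1)

/-- Pointwise comparison along segments coming from concavity of `w ^ (1/α)`. -/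
lemma weight_compare {n : ℕ} {S : Set (Euc n)} {α : ℝ} (hα : 0 < α) {w : Euc n → ℝ}
    (hpos : ∀ x ∈ S, 0 ≤ w x) (hconc : ConcaveOn ℝ S (fun x => w x ^ (1 / α)))
    {x y z : Euc n} (hx : x ∈ S) (hy : y ∈ S) {t : ℝ} (ht : 1 / 2 ≤ t) (ht1 : t ≤ 1)
    (hz : z = (1 - t) • x + t • y) : w y ≤ 2 ^ α * w z := by
  have hzS : z ∈ S := hz ▸ hconc.1 hx hy (by linarith) (by linarith) (by ring)
  have h1 := hconc.2 hx hy (by linarith : 0 ≤ 1 - t) (by linarith : 0 ≤ t) (by ring)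
  rw [← hz] at h1
  simp only [smul_eq_mul] at h1
  have h2 : 0 ≤ w x ^ (1 / α) := Real.rpow_nonneg (hpos x hx) _
  have h3 : 0 ≤ w y ^ (1 / α) := Real.rpow_nonneg (hpos y hy) _
  have h4 : w y ^ (1 / α) ≤ 2 * w z ^ (1 / α) := by nlinarith
  have h5 := Real.rpow_le_rpow h3 h4 hα.le
  rw [Real.mul_rpow (by norm_num) (Real.rpow_nonneg (hpos z hzS) _), ← Real.rpow_mul (hpos y hy),
    ← Real.rpow_mul (hpos z hzS), one_div, inv_mul_cancel₀ hα.ne', Real.rpow_one,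
    Real.rpow_one] at h5
  exact h5

/-- If the midpoint of `x, y` and `y` are separated by `F`, then `y` is swept from the boundary. -/
lemma sweep_point {n : ℕ} {S K F : Set (Euc n)} {α : ℝ} (hα : 0 < α) {w : Euc n → ℝ}
    (hKS : K ⊆ S) (hK : Convex ℝ K)
    (hpos : ∀ x ∈ S, 0 ≤ w x) (hconc : ConcaveOn ℝ S (fun x => w x ^ (1 / α)))
    {x y : Euc n} (hx : x ∈ K) (hy : y ∈ K)
    (h : ∃ z ∈ segment ℝ ((1 / 2 : ℝ) • (x + y)) y, z ∈ frontier F) :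
    ∃ z ∈ frontier F ∩ K, K.indicator w y ≤ 2 ^ α * K.indicator w z ∧
      ∃ s ∈ Icc (1 : ℝ) 2, y = x + s • (z - x) := by
  obtain ⟨z, ⟨a, b, ha, hb, hab, rfl⟩, hzF⟩ := h
  have hzt : a • ((1 / 2 : ℝ) • (x + y)) + b • y = (1 - (a / 2 + b)) • x + (a / 2 + b) • y := by
    have : 1 - (a / 2 + b) = a / 2 := by linarith
    rw [this]; module
  have ht : 1 / 2 ≤ a / 2 + b := by linarith
  have ht1 : a / 2 + b ≤ 1 := by linarith
  rw [hzt] at hzF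
  set t := a / 2 + b
  have hzK : (1 - t) • x + t • y ∈ K := hK hx hy (by linarith) (by linarith) (by ring)
  refine ⟨_, ⟨hzF, hzK⟩, ?_, t⁻¹, ⟨?_, ?_⟩, ?_⟩
  · rw [indicator_of_mem hy, indicator_of_mem hzK]
    exact weight_compare hα hpos hconc (hKS hx) (hKS hy) ht ht1 rfl
  · exact (one_le_inv₀ (by linarith)).2 ht1
  · rw [inv_le_comm₀ (by linarith) (by norm_num)]; linarith
  · have e : (1 - t) • x + t • y - x = t • (y - x) := by module
    rw [e, smul_smul, inv_mul_cancel₀ (by linarith), one_smul]; abel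

lemma key (m : ℕ) (α : ℝ) (hα : 0 < α) (S : Set (Euc (m + 1))) (hS : IsOpenConvexCone S)
    (w : Euc (m + 1) → ℝ) (hw : IsAdmissibleWeight S α w)
    (h1 : wVol w (ball (0 : Euc (m + 1)) 1 ∩ S) = 1)
    (F : Set (Euc (m + 1))) (hF : F ⊆ ball (0 : Euc (m + 1)) 1 ∩ S) (hFo : IsOpen F)
    (h2 : 2 * wVol w F ≤ 1) :
    wVol w F ≤ ENNReal.ofReal (2 * (cst m * 2 ^ α)) *
      ∫⁻ x in frontier F ∩ (ball (0 : Euc (m + 1)) 1 ∩ S), ENNReal.ofReal (w x) ∂μH[(m : ℝ)] := by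
  set K : Set (Euc (m + 1)) := ball (0 : Euc (m + 1)) 1 ∩ S with hKdef
  obtain ⟨hSo, hSc, -⟩ := hS
  obtain ⟨hwc, hwp, -, -, hconc⟩ := hw
  have hpos : ∀ x ∈ S, 0 ≤ w x := fun x hx => hwp x (subset_closure hx)
  have hKo : IsOpen K := isOpen_ball.inter hSo
  have hKm : MeasurableSet K := hKo.measurableSet
  have hKc : Convex ℝ K := (convex_ball _ _).inter hSc
  have hKS : K ⊆ S := inter_subset_right
  set w0 : Euc (m + 1) → ℝ := K.indicator w with hw0def
  have hw0 : ∀ y, 0 ≤ w0 y := fun y => indicator_nonneg (fun x hx => hpos x (hKS hx)) y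
  have hw0m : Measurable w0 := by
    have hc : ContinuousOn w K := hwc.mono (hKS.trans subset_closure)
    classical
    have := hc.measurable_piecewise (continuousOn_const (c := (0 : ℝ))) hKm
    rw [hw0def, ← piecewise_eq_indicator]; exact this
  set μ : Measure (Euc (m + 1)) := volume.withDensity (fun x => ENNReal.ofReal (w0 x)) with hμ
  have hμA : ∀ A : Set (Euc (m + 1)), μ A = ∫⁻ x in A, ENNReal.ofReal (w0 x) := fun A =>
    withDensity_apply' _ A
  have hcongr : ∀ (ν : Measure (Euc (m + 1))) (A : Set (Euc (m + 1))), A ⊆ K → MeasurableSet A →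
      ∫⁻ x in A, ENNReal.ofReal (w0 x) ∂ν = ∫⁻ x in A, ENNReal.ofReal (w x) ∂ν := by
    intro ν A hA hAm
    refine setLIntegral_congr_fun hAm fun x hx => ?_
    simp only [hw0def]
    rw [indicator_of_mem (hA hx)]
  have hFm := hFo.measurableSet
  have hμF : μ F = wVol w F := by rw [hμA, hcongr _ _ hF hFm]; rfl
  have hμK : μ K = 1 := by rw [hμA, hcongr _ _ le_rfl hKm, ← h1]; rfl
  have hMm : MeasurableSet (frontier F ∩ K) := isClosed_frontier.measurableSet.inter hKm
  rw [← hcongr _ _ inter_subset_right hMm, ← hμF]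
  rw [← hμF] at h2
  set P := ∫⁻ x in frontier F ∩ K, ENNReal.ofReal (w0 x) ∂μH[(m : ℝ)]
  set C := ENNReal.ofReal (cst m * 2 ^ α) with hC
  have hball : K ⊆ ball (0 : Euc (m + 1)) 1 := inter_subset_left
  have hsw : ∀ x ∈ K, ∀ A : Set (Euc (m + 1)),
      (∀ y ∈ A, ∃ z ∈ frontier F ∩ K, w0 y ≤ 2 ^ α * w0 z ∧
        ∃ s ∈ Icc (1 : ℝ) 2, y = x + s • (z - x)) → μ A ≤ C * P := by
    intro x hx A hA
    rw [hμA]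
    exact weighted_sweep m x _ A (hball hx) (inter_subset_right.trans hball) w0 hw0m hw0 _
      (by positivity) hA
  set G := K \ F with hG
  have hGm : MeasurableSet G := hKm.diff hFm
  have hmid : Measurable fun p : Euc (m + 1) × Euc (m + 1) => (1 / 2 : ℝ) • (p.1 + p.2) :=
    Continuous.measurable (by fun_prop)
  set Q := (fun p : Euc (m + 1) × Euc (m + 1) => (1 / 2 : ℝ) • (p.1 + p.2)) ⁻¹' F with hQ
  have hQm : MeasurableSet Q := hmid hFm
  have hprod : μ.prod μ (F ×ˢ G) = μ F * μ G := Measure.prod_prod _ _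
  have hE1 : μ.prod μ ((F ×ˢ G) ∩ Q) ≤ C * P * μ F := by
    rw [Measure.prod_apply ((hFm.prod hGm).inter hQm), ← setLIntegral_const,
      ← lintegral_indicator hFm]
    refine lintegral_mono fun x => ?_
    by_cases hx : x ∈ F
    · rw [indicator_of_mem hx]
      refine hsw x (hF hx) _ fun y hy => ?_
      obtain ⟨⟨-, hyG⟩, hyQ⟩ := hy
      exact sweep_point hα hKS hKc hpos hconc (hF hx) hyG.1 (exists_frontier_segment hyQ hyG.2)
    · rw [indicator_of_notMem hx]
      have : Prod.mk x ⁻¹' ((F ×ˢ G) ∩ Q) = ∅ := by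
        ext y; simp [hx]
      rw [this]; simp
  have hE2 : μ.prod μ ((F ×ˢ G) \ Q) ≤ C * P * μ G := by
    rw [Measure.prod_apply_symm ((hFm.prod hGm).diff hQm), ← setLIntegral_const,
      ← lintegral_indicator hGm]
    refine lintegral_mono fun y => ?_
    by_cases hy : y ∈ G
    · rw [indicator_of_mem hy]
      refine hsw y hy.1 _ fun x hx => ?_
      obtain ⟨⟨hxF, -⟩, hxQ⟩ := hx
      refine sweep_point hα hKS hKc hpos hconc hy.1 (hF hxF) ?_
      rw [segment_symm]
      refine exists_frontier_segment hxF ?_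
      rw [add_comm y x]
      exact hxQ
    · rw [indicator_of_notMem hy]
      have : (fun x => (x, y)) ⁻¹' ((F ×ˢ G) \ Q) = ∅ := by
        ext x; simp [hy]
      rw [this]; simp
  have hsum : μ F + μ G = 1 := by
    rw [← hμK, hG, measure_add_sdiff hFm.nullMeasurableSet, union_eq_self_of_subset_left hF]
  have hmain : μ F * μ G ≤ C * P := by
    calc μ F * μ G = μ.prod μ (F ×ˢ G) := hprod.symm
      _ = μ.prod μ ((F ×ˢ G) ∩ Q) + μ.prod μ ((F ×ˢ G) \ Q) := (measure_inter_add_sdiff _ hQm).symm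
      _ ≤ C * P * μ F + C * P * μ G := add_le_add hE1 hE2
      _ = C * P := by rw [← mul_add, hsum, mul_one]
  have hFle : μ F ≤ 1 := hsum ▸ le_self_add
  have hFt : μ F ≠ ⊤ := (hFle.trans_lt ENNReal.one_lt_top).ne
  have hG2 : 1 ≤ 2 * μ G := by
    have h3 : μ F + μ F ≤ μ F + μ G := by rw [← two_mul, hsum]; exact h2
    have h4 : μ F ≤ μ G := (ENNReal.add_le_add_iff_left hFt).1 h3
    rw [two_mul, ← hsum]
    gcongr
  calc μ F ≤ μ F * (2 * μ G) := le_mul_of_one_le_right' hG2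
    _ = 2 * (μ F * μ G) := by ring
    _ ≤ 2 * (C * P) := by gcongr
    _ = ENNReal.ofReal (2 * (cst m * 2 ^ α)) * P := by
      rw [ENNReal.ofReal_mul (by norm_num), mul_assoc]; simp [hC]

/-- Relative weighted isoperimetric inequality in the unit ball of the cone;
the constant depends only on `n` and `α`. -/
theorem stmt_17 {n : ℕ} (hn : 1 ≤ n) (α : ℝ) (hα : 0 < α) :
    ∃ C : ℝ, 0 < C ∧
      ∀ S : Set (Euc n), IsOpenConvexCone S →
      ∀ w : Euc n → ℝ, IsAdmissibleWeight S α w →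
        wVol w (ball (0 : Euc n) 1 ∩ S) = 1 →
      ∀ F : Set (Euc n), F ⊆ ball (0 : Euc n) 1 ∩ S → IsOpen F → HasSmoothBoundary F →
        2 * wVol w F ≤ wVol w (ball (0 : Euc n) 1 ∩ S) →
        wVol w F ≤
          ENNReal.ofReal
            (C * ∫ x in frontier F ∩ ball (0 : Euc n) 1 ∩ S, w x ∂(μH[(n : ℝ) - 1])) := by
  obtain ⟨m, rfl⟩ : ∃ m, n = m + 1 := ⟨n - 1, by omega⟩
  have hm : (((m + 1 : ℕ) : ℝ) - 1) = m := by push_cast; ring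
  rw [hm]
  have hcn := cst_nonneg m
  refine ⟨2 * (cst m * 2 ^ α) + 1, by positivity, ?_⟩
  intro S hS w hw h1 F hF hFo hFs h2
  rw [h1] at h2
  refine (key m α hα S hS w hw h1 F hF hFo h2).trans ?_
  rw [inter_assoc]
  set M := frontier F ∩ (ball (0 : Euc (m + 1)) 1 ∩ S) with hM
  have hMm : MeasurableSet M :=
    isClosed_frontier.measurableSet.inter (isOpen_ball.inter hS.1).measurableSet
  have hMS : M ⊆ closure S := fun x hx => subset_closure hx.2.2
  have hfin : μH[(m : ℝ)] M < ⊤ := (measure_mono inter_subset_left).trans_lt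
    (frontier_finite m F (hF.trans inter_subset_left) hFs)
  have hcomp : IsCompact (closedBall (0 : Euc (m + 1)) 1 ∩ closure S) :=
    (isCompact_closedBall _ _).inter_right isClosed_closure
  obtain ⟨B, hB⟩ := hcomp.exists_bound_of_continuousOn (hw.1.mono inter_subset_right)
  have hint : IntegrableOn w M μH[(m : ℝ)] := by
    refine IntegrableOn.of_bound hfin ((hw.1.mono hMS).aestronglyMeasurable hMm) B ?_
    refine (ae_restrict_iff' hMm).2 (Filter.Eventually.of_forall fun x hx => ?_)
    exact hB x ⟨ball_subset_closedBall hx.2.1, hMS hx⟩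
  have hnn : 0 ≤ᵐ[(μH[(m : ℝ)]).restrict M] w :=
    (ae_restrict_iff' hMm).2 (Filter.Eventually.of_forall fun x hx => hw.2.1 x (hMS hx))
  rw [← ofReal_integral_eq_lintegral_ofReal hint hnn, ← ENNReal.ofReal_mul (by positivity)]
  apply ENNReal.ofReal_le_ofReal
  have : 0 ≤ ∫ x in M, w x ∂μH[(m : ℝ)] := integral_nonneg_of_ae hnn
  nlinarith
end
end
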